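/- arXiv:1508.07920 — 2 statements merged into one kernel-verified Lean document; each statement's English description precedes it below -/
import Mathlib

section
/- Let (X, p_X) be a binary memoryless source. For β ∈ (0, 1/2), n ∈ ℕ, N = 2^n, δ_N = 2^{−N^β}, let G_N be the n-fold Kronecker power of the matrix [[1,0],[1,1]] over F₂, set A^N = X^N G_N, V_X = {i ∈ {1,…,N} : H(A_i | A^{i−1}) > 1 − δ_N}, and H_X = {i ∈ {1,…,N} : H(A_i | A^{i−1}) > δ_N}. Define the polar-based encoder φ_N(X^N, U) = [A^N[V_X], A^N[H_X \ V_X] ⊕ U], where U is a uniformly distributed seed of |H_X \ V_X| bits independent of X^N and shared with the decoder. Then for any R > H(X), the rate R is achievable by this sequence of codes: the seed rate |H_X \ V_X| / N → 0, the output length satisfies (1/N)(|V_X| + |H_X \ V_X|) → H(X) ≤ R eventually, the Kullback–Leibler divergence between the distribution of the encoder output and the uniform distribution on its range tends to 0, and there exist decoders ψ_N taking the encoder output and the seed such that P[X^N ≠ ψ_N(φ_N(X^N, U), U)] → 0 as N → ∞. -/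
open Finset Filter Real

attribute [local instance] Classical.propDecidable

noncomputable section

/-- `p` is a probability mass function on the finite type `α`. -/
def IsPMF {α : Type*} [Fintype α] (p : α → ℝ) : Prop :=
  (∀ a, 0 ≤ p a) ∧ ∑ a, p a = 1

/-- i.i.d. (product) distribution of `n` copies of a source with pmf `p`. -/
def iid {α : Type*} [Fintype α] (p : α → ℝ) (n : ℕ) : (Fin n → α) → ℝ :=
  fun x => ∏ i, p (x i)

/-- variational distance between two pmfs -/
def VD {α : Type*} [Fintype α] (p q : α → ℝ) : ℝ := ∑ a, |p a - q a|

/-- Shannon entropy, base 2 -/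
def Hsh {α : Type*} [Fintype α] (p : α → ℝ) : ℝ := - ∑ a, p a * Real.logb 2 (p a)

/-- Rényi entropy of order 2, base 2 -/
def H2 {α : Type*} [Fintype α] (p : α → ℝ) : ℝ := - Real.logb 2 (∑ a, (p a) ^ 2)

/-- min-entropy, base 2 -/
def Hinf {α : Type*} [Fintype α] (p : α → ℝ) : ℝ := - Real.logb 2 (⨆ a, p a)

/-- Kullback–Leibler divergence, base 2 -/
def KL {α : Type*} [Fintype α] (p q : α → ℝ) : ℝ := ∑ a, p a * Real.logb 2 (p a / q a)

/-- pushforward of a pmf along a map -/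
def push {α β : Type*} [Fintype α] [Fintype β] (p : α → ℝ) (f : α → β) : β → ℝ :=
  fun b => ∑ a, if f a = b then p a else 0

/-- conditional mutual information `I(X;Y|Q)` of a joint pmf on `Q × X × Y`, base 2:
`I(X;Y|Q) = H(Q,X) + H(Q,Y) - H(Q) - H(Q,X,Y)`. -/
def condMI {Q X Y : Type*} [Fintype Q] [Fintype X] [Fintype Y] (p : Q × X × Y → ℝ) : ℝ :=
  Hsh (fun qx : Q × X => ∑ y, p (qx.1, qx.2, y))
    + Hsh (fun qy : Q × Y => ∑ x, p (qy.1, x, qy.2))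
    - Hsh (fun q : Q => ∑ x, ∑ y, p (q, x, y))
    - Hsh p

/-- the set of `ε`-letter-typical sequences of length `n` -/
def typ {α : Type*} [Fintype α] (p : α → ℝ) (n : ℕ) (ε : ℝ) : Finset (Fin n → α) :=
  Finset.univ.filter fun x =>
    ∀ a, |((Finset.univ.filter fun i => x i = a).card : ℝ) / n - p a| ≤ ε * p a

/-- cumulative distribution function of the standard normal distribution -/
def stdΦ (x : ℝ) : ℝ := ∫ t in Set.Iic x, Real.exp (-(t ^ 2) / 2) / Real.sqrt (2 * Real.pi)

/-- `⌈2^r⌉₊`, the size of a message set `{1,…,2^r}` -/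
def e2 (r : ℝ) : ℕ := ⌈(2:ℝ) ^ r⌉₊


/-- the polar transform `G_N = [[1,0],[1,1]]^{⊗n}` over `F₂`, `N = 2^n` -/
def polarG : (n : ℕ) → Matrix (Fin (2 ^ n)) (Fin (2 ^ n)) (ZMod 2)
  | 0 => 1
  | n + 1 =>
    Matrix.reindex (finProdFinEquiv.trans (finCongr (pow_succ 2 n).symm))
                   (finProdFinEquiv.trans (finCongr (pow_succ 2 n).symm))
      (Matrix.kroneckerMap (· * ·) (polarG n) (Matrix.of ![![1, 0], ![1, 1]]))

/-- the distribution of `A^N = X^N G_N` for an i.i.d. source `X` -/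
def polarA (pX : ZMod 2 → ℝ) (n : ℕ) : (Fin (2 ^ n) → ZMod 2) → ℝ :=
  push (iid pX (2 ^ n)) (fun x => Matrix.vecMul x (polarG n))

/-- conditional entropy `H(A_i | A^{i-1})` of the polarized source -/
def polarCondH (pX : ZMod 2 → ℝ) (n : ℕ) (i : Fin (2 ^ n)) : ℝ :=
  Hsh (push (polarA pX n) (fun a => fun j : Fin ((i : ℕ) + 1) => a (Fin.castLE i.isLt j)))
    - Hsh (push (polarA pX n) (fun a => fun j : Fin (i : ℕ) => a (Fin.castLE i.isLt.le j)))

/-- `δ_N = 2^{-N^β}` -/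
def polarδ (n : ℕ) (β : ℝ) : ℝ := (2:ℝ) ^ (-(((2:ℝ) ^ n) ^ β))

/-- the very-high-entropy set `V_X` -/
def polarV (pX : ZMod 2 → ℝ) (β : ℝ) (n : ℕ) : Finset (Fin (2 ^ n)) :=
  Finset.univ.filter fun i => 1 - polarδ n β < polarCondH pX n i

/-- the high-entropy set `H_X` -/
def polarH (pX : ZMod 2 → ℝ) (β : ℝ) (n : ℕ) : Finset (Fin (2 ^ n)) :=
  Finset.univ.filter fun i => polarδ n β < polarCondH pX n i



/-! ### Abstract binary tree averaging -/

/-- average of `f` over the `2^n` descendants of `s` in the tree with branches `m`, `p` -/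
def Ex {α : Type} (m p : α → α) : ℕ → (α → ℝ) → α → ℝ
  | 0, f, s => f s
  | n + 1, f, s => (Ex m p n f (m s) + Ex m p n f (p s)) / 2

lemma Ex_mono {α : Type} (m p : α → α) (n : ℕ) (f g : α → ℝ) (h : ∀ s, f s ≤ g s) (s : α) :
    Ex m p n f s ≤ Ex m p n g s := by
  induction n generalizing s with
  | zero => exact h s
  | succ n ih => simp only [Ex]; linarith [ih (m s), ih (p s)]

lemma Ex_nonneg {α : Type} (m p : α → α) (n : ℕ) (f : α → ℝ) (h : ∀ s, 0 ≤ f s) (s : α) :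
    0 ≤ Ex m p n f s := by
  induction n generalizing s with
  | zero => exact h s
  | succ n ih => simp only [Ex]; linarith [ih (m s), ih (p s)]

lemma Ex_add_const {α : Type} (m p : α → α) (n : ℕ) (f : α → ℝ) (c : ℝ) (s : α) :
    Ex m p n (fun s => f s + c) s = Ex m p n f s + c := by
  induction n generalizing s with
  | zero => rfl
  | succ n ih => simp only [Ex, ih]; ring

lemma Ex_mul_const {α : Type} (m p : α → α) (n : ℕ) (f : α → ℝ) (c : ℝ) (s : α) :
    Ex m p n (fun s => c * f s) s = c * Ex m p n f s := by
  induction n generalizing s with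
  | zero => rfl
  | succ n ih => simp only [Ex, ih]; ring

lemma Ex_comp {α : Type} (m p : α → α) (n k : ℕ) (f : α → ℝ) (s : α) :
    Ex m p (n + k) f s = Ex m p n (Ex m p k f) s := by
  induction n generalizing s with
  | zero => simp [Ex]
  | succ n ih => rw [show n + 1 + k = (n + k) + 1 by omega]; simp only [Ex, ih]

lemma Ex_swap {α : Type} (m p : α → α) (n : ℕ) (f : α → ℝ) (s : α) :
    Ex m p n f s = Ex p m n f s := by
  induction n generalizing s with
  | zero => rfl
  | succ n ih => simp only [Ex, ih]; ring

/-- indicator of a predicate -/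
def ind {α : Type} (P : α → Prop) (s : α) : ℝ := if P s then 1 else 0

lemma ind_nonneg {α : Type} (P : α → Prop) (s : α) : 0 ≤ ind P s := by
  unfold ind; split_ifs <;> norm_num

lemma ind_mono {α : Type} (P Q : α → Prop) (h : ∀ s, P s → Q s) (s : α) : ind P s ≤ ind Q s := by
  unfold ind; split_ifs with h1 h2
  · exact le_rfl
  · exact absurd (h s h1) h2
  · norm_num
  · exact le_rfl

lemma ind_le_one {α : Type} (P : α → Prop) (s : α) : ind P s ≤ 1 := by
  unfold ind; split_ifs <;> norm_num

lemma Ex_ind_le_one {α : Type} (m p : α → α) (n : ℕ) (P : α → Prop) (s : α) :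
    Ex m p n (ind P) s ≤ 1 := by
  induction n generalizing s with
  | zero => exact ind_le_one _ _
  | succ n ih => simp only [Ex]; linarith [ih (m s), ih (p s)]

lemma Ex_chain {α : Type} (m p : α → α) (n k : ℕ) (P Q : α → Prop) (ε : ℝ) (hε : 0 ≤ ε)
    (h : ∀ s, P s → Ex m p k (ind fun s => ¬ Q s) s ≤ ε) (s : α) :
    Ex m p (n + k) (ind fun s => ¬ Q s) s ≤ Ex m p n (ind fun s => ¬ P s) s + ε := by
  rw [Ex_comp, ← Ex_add_const]
  apply Ex_mono
  intro s
  by_cases hP : P s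
  · have := h s hP
    simpa [ind, hP] using this
  · have := Ex_ind_le_one m p k (fun s => ¬ Q s) s
    have h2 : ind (fun s => ¬ P s) s = 1 := by simp [ind, hP]
    rw [h2]; linarith

lemma Ex_markov {α : Type} (m p : α → α) (n : ℕ) (f : α → ℝ) (hf : ∀ s, 0 ≤ f s) (c : ℝ)
    (hc : 0 < c) (s : α) :
    Ex m p n (ind fun s => ¬ f s ≤ c) s ≤ Ex m p n f s / c := by
  have : Ex m p n f s / c = Ex m p n (fun s => c⁻¹ * f s) s := by
    rw [Ex_mul_const]; field_simp
  rw [this]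
  apply Ex_mono
  intro s
  unfold ind
  split_ifs with h
  · push Not at h
    rw [inv_mul_eq_div, le_div_iff₀ hc]; linarith
  · have := hf s; positivity

lemma contraction_ineq (z t : ℝ) (hz : 0 ≤ z) (ht : 0 ≤ t) (h : z ^ 2 + t ^ 2 ≤ 1) :
    √(z * (2 - t)) + √(t * (2 - z)) ≤ 2 * (39 / 40) := by
  have hz1 : z ≤ 1 := by nlinarith
  have ht1 : t ≤ 1 := by nlinarith
  have ha : 0 ≤ z * (2 - t) := mul_nonneg hz (by linarith)
  have hb : 0 ≤ t * (2 - z) := mul_nonneg ht (by linarith)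
  have hs : z + t ≤ 1.4143 := by nlinarith [sq_nonneg (z - t)]
  have hq : z * t ≤ 1 / 2 := by nlinarith [sq_nonneg (z - t)]
  have hq0 : 0 ≤ z * t := mul_nonneg hz ht
  have key : √(z * (2 - t)) * √(t * (2 - z)) ≤ 1.90125 - (z + t) + z * t := by
    rw [← Real.sqrt_mul ha]
    apply Real.sqrt_le_iff.mpr
    refine ⟨by linarith, ?_⟩
    have : (0.48 : ℝ) ^ 2 ≤ (1.90125 - (z + t)) ^ 2 := by
      apply pow_le_pow_left₀ (by norm_num); linarith
    nlinarith
  have h1 := Real.sq_sqrt ha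
  have h2 := Real.sq_sqrt hb
  have h3 := Real.sqrt_nonneg (z * (2 - t))
  have h4 := Real.sqrt_nonneg (t * (2 - z))
  apply abs_le_of_sq_le_sq' _ (by norm_num) |>.2
  nlinarith

/-- hypotheses on the two parameter processes -/
structure TreeHyp {α : Type} (m p : α → α) (Z T : α → ℝ) : Prop where
  z0 : ∀ s, 0 ≤ Z s
  t0 : ∀ s, 0 ≤ T s
  zt : ∀ s, Z s ^ 2 + T s ^ 2 ≤ 1
  zp : ∀ s, Z (p s) ≤ Z s ^ 2
  zm : ∀ s, Z (m s) ≤ 2 * Z s - Z s ^ 2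
  tm : ∀ s, T (m s) ≤ T s ^ 2
  tp : ∀ s, T (p s) ≤ 2 * T s - T s ^ 2

lemma Ex_contract {α : Type} (m p : α → α) (Z T : α → ℝ) (H : TreeHyp m p Z T) (n : ℕ) (s : α) :
    Ex m p n (fun s => √(Z s * T s)) s ≤ (39 / 40) ^ n * √(Z s * T s) := by
  induction n generalizing s with
  | zero => simp [Ex]
  | succ n ih =>
    simp only [Ex]
    have hz := H.z0 s
    have ht := H.t0 s
    have hc := contraction_ineq _ _ hz ht (H.zt s)
    have hz1 : Z s ≤ 1 := by nlinarith [H.zt s]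
    have ht1 : T s ≤ 1 := by nlinarith [H.zt s]
    have e1 : √(Z (p s) * T (p s)) ≤ √(Z s * T s) * √(Z s * (2 - T s)) := by
      rw [← Real.sqrt_mul (mul_nonneg hz ht)]
      apply Real.sqrt_le_sqrt
      calc _ ≤ Z s ^ 2 * (2 * T s - T s ^ 2) :=
            mul_le_mul (H.zp s) (H.tp s) (H.t0 _) (by positivity)
        _ = _ := by ring
    have e2 : √(Z (m s) * T (m s)) ≤ √(Z s * T s) * √(T s * (2 - Z s)) := by
      rw [← Real.sqrt_mul (mul_nonneg hz ht)]
      apply Real.sqrt_le_sqrt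
      calc _ ≤ (2 * Z s - Z s ^ 2) * T s ^ 2 :=
            mul_le_mul (H.zm s) (H.tm s) (H.t0 _) (by nlinarith)
        _ = _ := by ring
    have hf := Real.sqrt_nonneg (Z s * T s)
    have hl : (0:ℝ) ≤ (39 / 40) ^ n := by positivity
    calc _ ≤ ((39 / 40) ^ n * √(Z (m s) * T (m s)) + (39 / 40) ^ n * √(Z (p s) * T (p s))) / 2 := by
          linarith [ih (m s), ih (p s)]
      _ = (39 / 40) ^ n * ((√(Z (m s) * T (m s)) + √(Z (p s) * T (p s))) / 2) := by ring
      _ ≤ (39 / 40) ^ n * (39 / 40 * √(Z s * T s)) := by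
          apply mul_le_mul_of_nonneg_left _ hl
          nlinarith
      _ = _ := by ring

/-- first stage: exponentially small parameter in the depth -/
lemma stage0 {α : Type} (m p : α → α) (Z T : α → ℝ) (H : TreeHyp m p Z T) (j : ℕ) (s : α) :
    Ex m p (64 * j) (ind fun s => ¬ (Z s ≤ (2:ℝ) ^ (-(2 * j : ℝ)) ∨ T s ≤ (2:ℝ) ^ (-(2 * j : ℝ)))) s
      ≤ (4 * (39 / 40) ^ 64) ^ j := by
  have h1 := Ex_markov m p (64 * j) (fun s => √(Z s * T s)) (fun s => Real.sqrt_nonneg _)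
    ((2:ℝ) ^ (-(2 * j : ℝ))) (by positivity) s
  have h2 := Ex_contract m p Z T H (64 * j) s
  have h3 : √(Z s * T s) ≤ 1 := by
    rw [Real.sqrt_le_iff]
    refine ⟨by norm_num, ?_⟩
    nlinarith [H.zt s, sq_nonneg (Z s - T s)]
  have h4 : ((2:ℝ) ^ (-(2 * j : ℝ)))⁻¹ = 4 ^ j := by
    rw [Real.rpow_neg (by norm_num), inv_inv, Real.rpow_mul (by norm_num), Real.rpow_natCast]
    norm_num
  calc _ ≤ Ex m p (64 * j) (ind fun s => ¬ √(Z s * T s) ≤ (2:ℝ) ^ (-(2 * j : ℝ))) s := by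
        apply Ex_mono
        apply ind_mono
        intro s hs hc
        push Not at hs
        have hpos : (0:ℝ) < (2:ℝ) ^ (-(2 * j : ℝ)) := by positivity
        rw [Real.sqrt_le_iff] at hc
        nlinarith [hc.2, mul_lt_mul'' hs.1 hs.2 hpos.le hpos.le]
    _ ≤ _ := h1
    _ ≤ (39 / 40) ^ (64 * j) / (2:ℝ) ^ (-(2 * j : ℝ)) := by
        apply div_le_div_of_nonneg_right _ (by positivity)
        refine h2.trans ?_
        apply mul_le_of_le_one_right (by positivity) h3
    _ = _ := by
        rw [div_eq_mul_inv, h4, mul_pow, pow_mul]; ring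

lemma stage_aux {α : Type} (m p : α → α) (Z : α → ℝ) (z0 : ∀ s, 0 ≤ Z s)
    (zp : ∀ s, Z (p s) ≤ Z s ^ 2) (zm : ∀ s, Z (m s) ≤ 2 * Z s) (L τ μ : ℝ) (hμ : τ < μ)
    (J : ℕ) (hL : (J : ℝ) ≤ L) (k : ℕ) :
    ∀ (j S : ℕ) (s : α), j + k = J → Z s ≤ (2:ℝ) ^ (-((2:ℝ) ^ S * (L - j))) →
      Ex m p k (ind fun s => ¬ Z s ≤ (2:ℝ) ^ (-((2:ℝ) ^ τ * (L - J)))) s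
        ≤ (k + (2 * S + k - 2 * μ) ^ 2) / (2 * μ - 2 * τ) ^ 2 := by
  have hd : 0 < (2 * μ - 2 * τ) ^ 2 := by apply pow_pos; linarith
  induction k with
  | zero =>
    intro j S s hj hs
    simp only [Ex]
    unfold ind
    split_ifs with h
    · rw [le_div_iff₀ hd]
      have hS : (S : ℝ) < τ := by
        by_contra hc
        push Not at hc
        apply h
        refine hs.trans ?_
        apply Real.rpow_le_rpow_of_exponent_le (by norm_num)
        have : (j : ℝ) = J := by exact_mod_cast hj
        rw [this]
        apply neg_le_neg
        apply mul_le_mul_of_nonneg_right _ (by linarith)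
        rw [← Real.rpow_natCast]
        exact Real.rpow_le_rpow_of_exponent_le (by norm_num) hc
      push_cast
      nlinarith
    · positivity
  | succ k ih =>
    intro j S s hj hs
    simp only [Ex]
    have hjk : (j + 1 : ℝ) + k = J := by exact_mod_cast (by omega : j + 1 + k = J)
    have hk0 : (0:ℝ) ≤ k := Nat.cast_nonneg k
    have hm := ih (j + 1) S (m s) (by omega) (by
      refine (zm s).trans ?_
      have h1 : 2 * Z s ≤ (2:ℝ) ^ (1 + -((2:ℝ) ^ S * (L - j))) := by
        rw [Real.rpow_add (by norm_num), Real.rpow_one]; linarith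
      refine h1.trans ?_
      apply Real.rpow_le_rpow_of_exponent_le (by norm_num)
      push_cast
      have : (1:ℝ) ≤ 2 ^ S := one_le_pow₀ (by norm_num)
      nlinarith)
    have hp := ih (j + 1) (S + 1) (p s) (by omega) (by
      refine (zp s).trans ?_
      have h1 : Z s ^ 2 ≤ ((2:ℝ) ^ (-((2:ℝ) ^ S * (L - j)))) ^ 2 := pow_le_pow_left₀ (z0 s) hs 2
      refine h1.trans ?_
      rw [← Real.rpow_natCast, ← Real.rpow_mul (by norm_num)]
      apply Real.rpow_le_rpow_of_exponent_le (by norm_num)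
      push_cast
      have : (1:ℝ) ≤ 2 ^ S := one_le_pow₀ (by norm_num)
      rw [pow_succ]
      nlinarith)
    rw [le_div_iff₀ hd] at hm hp ⊢
    push_cast at hm hp ⊢
    nlinarith

lemma stage {α : Type} (m p : α → α) (Z : α → ℝ) (z0 : ∀ s, 0 ≤ Z s)
    (zp : ∀ s, Z (p s) ≤ Z s ^ 2) (zm : ∀ s, Z (m s) ≤ 2 * Z s) (L a : ℝ) (ha : a < 1 / 2)
    (k : ℕ) (hk : 0 < k) (hL : (k : ℝ) ≤ L) (s : α) (hs : Z s ≤ (2:ℝ) ^ (-L)) :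
      Ex m p k (ind fun s => ¬ Z s ≤ (2:ℝ) ^ (-((2:ℝ) ^ (a * k) * (L - k)))) s
        ≤ 1 / ((1 - 2 * a) ^ 2 * k) := by
  have hk' : (0:ℝ) < k := by exact_mod_cast hk
  have h := stage_aux m p Z z0 zp zm L (a * k) (k / 2) (by nlinarith) k hL k 0 0 s (by omega)
    (by simpa using hs)
  refine h.trans (le_of_eq ?_)
  have : (1 - 2 * a) ≠ 0 := by linarith
  have h2 : (2 * ((k:ℝ) / 2) - 2 * (a * k)) = (1 - 2 * a) * k := by ring
  rw [h2]
  field_simp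
  push_cast
  ring

lemma stage_both {α : Type} (m p : α → α) (Z T : α → ℝ) (H : TreeHyp m p Z T)
    (L L' a : ℝ) (ha : a < 1 / 2)
    (k : ℕ) (hk : 0 < k) (hL : (k : ℝ) ≤ L) (hL' : L' ≤ (2:ℝ) ^ (a * k) * (L - k)) (s : α)
    (hs : Z s ≤ (2:ℝ) ^ (-L) ∨ T s ≤ (2:ℝ) ^ (-L)) :
      Ex m p k (ind fun s => ¬ (Z s ≤ (2:ℝ) ^ (-L') ∨ T s ≤ (2:ℝ) ^ (-L'))) s
        ≤ 1 / ((1 - 2 * a) ^ 2 * k) := by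
  have hmon : (2:ℝ) ^ (-((2:ℝ) ^ (a * k) * (L - k))) ≤ (2:ℝ) ^ (-L') :=
    Real.rpow_le_rpow_of_exponent_le (by norm_num) (by linarith)
  rcases hs with hs | hs
  · refine le_trans ?_ (stage m p Z H.z0 H.zp (fun s => by nlinarith [H.zm s, sq_nonneg (Z s)])
      L a ha k hk hL s hs)
    apply Ex_mono
    apply ind_mono
    intro s h1 h2
    exact h1 (Or.inl (h2.trans hmon))
  · refine le_trans ?_ (stage p m T H.t0 H.tm (fun s => by nlinarith [H.tp s, sq_nonneg (T s)])
      L a ha k hk hL s hs)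
    rw [Ex_swap]
    apply Ex_mono
    apply ind_mono
    intro s h1 h2
    exact h1 (Or.inr (h2.trans hmon))

lemma tree_main {α : Type} (m p : α → α) (Z T : α → ℝ) (H : TreeHyp m p Z T)
    (b : ℝ) (hb0 : 0 < b) (hb : b < 1 / 2) (s : α) :
    Tendsto (fun n : ℕ => Ex m p n (ind fun s => ¬ (Z s ≤ (2:ℝ) ^ (-((2:ℝ) ^ (b * n))) ∨
      T s ≤ (2:ℝ) ^ (-((2:ℝ) ^ (b * n))))) s) atTop (nhds 0) := by
  obtain ⟨a, ha1, ha2⟩ := exists_between hb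
  have ha0 : 0 < a := hb0.trans ha1
  obtain ⟨K, hK⟩ := exists_nat_gt (max 130 (65 * a / (a - b)))
  have hK130 : (130:ℝ) < K := (le_max_left _ _).trans_lt hK
  have hKa : 65 * a < K * (a - b) := by
    have := (le_max_right _ _).trans_lt hK
    rwa [div_lt_iff₀ (by linarith)] at this
  have hKn : 130 < K := by exact_mod_cast hK130
  have hj : Tendsto (fun n : ℕ => n / K) atTop atTop := Nat.tendsto_div_const_atTop (by omega)
  have hc : 0 < (1 - 2 * a) ^ 2 := by apply pow_pos; linarith
  have hlim : Tendsto (fun j : ℕ => (4 * (39 / 40 : ℝ) ^ 64) ^ j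
      + 1 / ((1 - 2 * (1 / 4 : ℝ)) ^ 2 * j) + 1 / ((1 - 2 * a) ^ 2 * j)) atTop (nhds 0) := by
    have h1 : Tendsto (fun j : ℕ => (4 * (39 / 40 : ℝ) ^ 64) ^ j) atTop (nhds 0) :=
      tendsto_pow_atTop_nhds_zero_of_lt_one (by norm_num) (by norm_num)
    have h2 : ∀ c : ℝ, Tendsto (fun j : ℕ => 1 / (c * j)) atTop (nhds 0) := by
      intro c
      have := (tendsto_one_div_atTop_nhds_zero_nat (𝕜 := ℝ)).const_mul (1 / c)
      rw [mul_zero] at this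
      refine this.congr fun j => ?_
      rw [one_div_mul_one_div]
    simpa using (h1.add (h2 _)).add (h2 _)
  have hgrow : ∀ᶠ j : ℕ in atTop, 4 * (K : ℝ) ≤ (2:ℝ) ^ ((1 / 4 : ℝ) * j) := by
    have : Tendsto (fun j : ℕ => (2:ℝ) ^ ((1 / 4 : ℝ) * j)) atTop atTop := by
      have h : Tendsto (fun j : ℕ => ((2:ℝ) ^ (1 / 4 : ℝ)) ^ j) atTop atTop :=
        tendsto_pow_atTop_atTop_of_one_lt (Real.one_lt_rpow (by norm_num) (by norm_num))
      refine h.congr fun j => ?_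
      rw [Real.rpow_mul (by norm_num), Real.rpow_natCast]
    exact this.eventually_ge_atTop _
  refine squeeze_zero' (Eventually.of_forall fun n => Ex_nonneg _ _ _ _ (ind_nonneg _) _) ?_
    (hlim.comp hj)
  filter_upwards [hj.eventually hgrow, hj.eventually (eventually_gt_atTop 0)] with n hn1 hn2
  simp only [Function.comp]
  set j := n / K with hjdef
  have hjK : K * j ≤ n := Nat.mul_div_le n K
  have hjK2 : n < K * (j + 1) := by
    have := Nat.lt_mul_div_succ n (show 0 < K by omega)
    simpa using this
  have hj65 : 130 * j ≤ n := by nlinarith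
  obtain ⟨k, hk⟩ : ∃ k, n = 64 * j + j + k := ⟨n - 65 * j, by omega⟩
  have hkj : j ≤ k := by omega
  have hjR : (0:ℝ) < j := by exact_mod_cast hn2
  have hnR : (n:ℝ) = 65 * j + k := by rw [hk]; push_cast; ring
  have hjKR : (K:ℝ) * j ≤ n := by exact_mod_cast hjK
  have hjK2R : (n:ℝ) < K * (j + 1) := by exact_mod_cast hjK2
  have hkn : (k:ℝ) + 1 ≤ 2 * n := by
    have : k + 1 ≤ 2 * n := by omega
    exact_mod_cast this
  have hj1 : (1:ℝ) ≤ j := by exact_mod_cast hn2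
  have s1 := Ex_chain m p (64 * j) j
    (fun s => Z s ≤ (2:ℝ) ^ (-(2 * j : ℝ)) ∨ T s ≤ (2:ℝ) ^ (-(2 * j : ℝ)))
    (fun s => Z s ≤ (2:ℝ) ^ (-(2 * n : ℝ)) ∨ T s ≤ (2:ℝ) ^ (-(2 * n : ℝ)))
    (1 / ((1 - 2 * (1 / 4 : ℝ)) ^ 2 * j)) (by positivity)
    (fun s hs => stage_both m p Z T H (2 * j) (2 * n) (1 / 4) (by norm_num) j hn2 (by linarith)
      (by
        have : (2 * j - j : ℝ) = j := by ring
        rw [this]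
        have h3 : 4 * (K:ℝ) * j ≤ (2:ℝ) ^ ((1 / 4 : ℝ) * j) * j :=
          mul_le_mul_of_nonneg_right hn1 hjR.le
        nlinarith) s hs) s
  have hexp : b * n ≤ a * k := by
    have : (k:ℝ) = n - 65 * j := by linarith
    rw [this]
    have h1 : (a - b) * (K * j) ≤ (a - b) * n := mul_le_mul_of_nonneg_left hjKR (by linarith)
    have h2 : 65 * a * j ≤ K * (a - b) * j := mul_le_mul_of_nonneg_right hKa.le hjR.le
    nlinarith
  have s2 := Ex_chain m p (64 * j + j) k
    (fun s => Z s ≤ (2:ℝ) ^ (-(2 * n : ℝ)) ∨ T s ≤ (2:ℝ) ^ (-(2 * n : ℝ)))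
    (fun s => Z s ≤ (2:ℝ) ^ (-((2:ℝ) ^ (b * n))) ∨ T s ≤ (2:ℝ) ^ (-((2:ℝ) ^ (b * n))))
    (1 / ((1 - 2 * a) ^ 2 * k)) (by positivity)
    (fun s hs => stage_both m p Z T H (2 * n) ((2:ℝ) ^ (b * n)) a ha2 k (by omega) (by linarith)
      (by
        have h3 : (2:ℝ) ^ (b * n) ≤ (2:ℝ) ^ (a * k) :=
          Real.rpow_le_rpow_of_exponent_le (by norm_num) hexp
        have h4 : (0:ℝ) < (2:ℝ) ^ (a * k) := by positivity
        nlinarith) s hs) s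
  have s0 := stage0 m p Z T H j s
  have hkR : (j:ℝ) ≤ k := by exact_mod_cast hkj
  have hfin : 1 / ((1 - 2 * a) ^ 2 * k) ≤ 1 / ((1 - 2 * a) ^ 2 * j) := by
    apply one_div_le_one_div_of_le (by positivity)
    exact mul_le_mul_of_nonneg_left hkR hc.le
  rw [← hk] at s2
  linarith

/-! ### Finite random variables -/

lemma zsum (f : ZMod 2 → ℝ) : ∑ x, f x = f 0 + f 1 := Fin.sum_univ_two f

lemma zcases (x : ZMod 2) : x = 0 ∨ x = 1 := by
  revert x; decide

lemma push_nonneg {Ω β : Type} [Fintype Ω] [Fintype β] (p : Ω → ℝ) (hp : ∀ a, 0 ≤ p a)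
    (f : Ω → β) (b : β) : 0 ≤ push p f b := by
  unfold push
  apply Finset.sum_nonneg
  intro a _
  split_ifs
  · exact hp a
  · exact le_rfl

lemma push_sum {Ω β : Type} [Fintype Ω] [Fintype β] (p : Ω → ℝ) (f : Ω → β) :
    ∑ b, push p f b = ∑ a, p a := by
  unfold push
  rw [Finset.sum_comm]
  apply Finset.sum_congr rfl
  intro a _
  rw [Finset.sum_eq_single (f a)]
  · simp
  · intro b _ hb
    rw [if_neg (Ne.symm hb)]
  · simp

lemma push_sum_mul {Ω β : Type} [Fintype Ω] [Fintype β] (p : Ω → ℝ) (f : Ω → β) (g : β → ℝ) :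
    ∑ b, push p f b * g b = ∑ a, p a * g (f a) := by
  unfold push
  simp_rw [Finset.sum_mul]
  rw [Finset.sum_comm]
  apply Finset.sum_congr rfl
  intro a _
  rw [Finset.sum_eq_single (f a)]
  · simp
  · intro b _ hb
    rw [if_neg (Ne.symm hb), zero_mul]
  · simp

lemma push_zero {Ω β : Type} [Fintype Ω] [Fintype β] (p : Ω → ℝ) (f : Ω → β) (b : β)
    (hb : b ∉ Set.range f) : push p f b = 0 := by
  unfold push
  apply Finset.sum_eq_zero
  intro a _
  rw [if_neg]
  intro h
  exact hb ⟨a, h⟩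

lemma push_push {Ω β γ : Type} [Fintype Ω] [Fintype β] [Fintype γ] (p : Ω → ℝ) (f : Ω → β)
    (g : β → γ) : push (push p f) g = push p (fun a => g (f a)) := by
  funext c
  have := push_sum_mul p f (fun b => if g b = c then 1 else 0)
  simp only [mul_ite, mul_one, mul_zero] at this
  exact this

lemma push_equiv {Ω Ω' β : Type} [Fintype Ω] [Fintype Ω'] [Fintype β] (p : Ω → ℝ) (p' : Ω' → ℝ)
    (e : Ω ≃ Ω') (h : ∀ ω, p ω = p' (e ω)) (f : Ω' → β) :
    push p (fun ω => f (e ω)) = push p' f := by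
  funext b
  unfold push
  simp_rw [h]
  exact Equiv.sum_comp e (fun a => if f a = b then p' a else 0)

lemma sum_kernel {Ω β γ : Type} [Fintype Ω] [Fintype β] [Fintype γ] (f : Ω → β) (g : Ω → γ)
    (hk : ∀ x y, f x = f y ↔ g x = g y) (K : β → ℝ) (L : γ → ℝ)
    (hK : ∀ b, b ∉ Set.range f → K b = 0) (hL : ∀ b, b ∉ Set.range g → L b = 0)
    (h : ∀ x, K (f x) = L (g x)) : ∑ b, K b = ∑ c, L c := by
  let Q := Quotient (Setoid.ker f)
  let e : Q → β := Quotient.lift f (fun a b hab => hab)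
  let e' : Q → γ := Quotient.lift g (fun a b hab => (hk a b).1 hab)
  have he : Function.Injective e := by
    rintro ⟨a⟩ ⟨b⟩ hab
    exact Quotient.sound hab
  have he' : Function.Injective e' := by
    rintro ⟨a⟩ ⟨b⟩ hab
    exact Quotient.sound ((hk a b).2 hab)
  have h1 : ∑ q : Q, K (e q) = ∑ b, K b := by
    apply Fintype.sum_of_injective e he
    · intro b hb
      apply hK
      rintro ⟨a, rfl⟩
      exact hb ⟨Quotient.mk _ a, rfl⟩
    · intro _; rfl
  have h2 : ∑ q : Q, L (e' q) = ∑ b, L b := by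
    apply Fintype.sum_of_injective e' he'
    · intro b hb
      apply hL
      rintro ⟨a, rfl⟩
      exact hb ⟨Quotient.mk _ a, rfl⟩
    · intro _; rfl
  rw [← h1, ← h2]
  apply Finset.sum_congr rfl
  rintro ⟨a⟩ _
  exact h a

lemma push_kernel {Ω β γ : Type} [Fintype Ω] [Fintype β] [Fintype γ] (p : Ω → ℝ) (f : Ω → β)
    (g : Ω → γ) (hk : ∀ x y, f x = f y ↔ g x = g y) (x : Ω) :
    push p f (f x) = push p g (g x) := by
  unfold push
  apply Finset.sum_congr rfl
  intro a _
  simp only [hk a x]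

lemma Hsh_kernel {Ω β γ : Type} [Fintype Ω] [Fintype β] [Fintype γ] (p : Ω → ℝ) (f : Ω → β)
    (g : Ω → γ) (hk : ∀ x y, f x = f y ↔ g x = g y) :
    Hsh (push p f) = Hsh (push p g) := by
  unfold Hsh
  congr 1
  apply sum_kernel f g hk
  · intro b hb; rw [push_zero p f b hb, zero_mul]
  · intro b hb; rw [push_zero p g b hb, zero_mul]
  · intro x; rw [push_kernel p f g hk x]

/-- joint weights of `(X, Y)` -/
def Jt {Ω β : Type} [Fintype Ω] [Fintype β] (p : Ω → ℝ) (X : Ω → ZMod 2) (Y : Ω → β)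
    (x : ZMod 2) (y : β) : ℝ := push p (fun ω => (X ω, Y ω)) (x, y)

/-- additive functional of the joint weights -/
def Fn {Ω β : Type} [Fintype Ω] [Fintype β] (φ : ℝ → ℝ → ℝ) (p : Ω → ℝ) (X : Ω → ZMod 2)
    (Y : Ω → β) : ℝ := ∑ y, φ (Jt p X Y 0 y) (Jt p X Y 1 y)

lemma Jt_nonneg {Ω β : Type} [Fintype Ω] [Fintype β] (p : Ω → ℝ) (hp : ∀ a, 0 ≤ p a)
    (X : Ω → ZMod 2) (Y : Ω → β) (x y) : 0 ≤ Jt p X Y x y := push_nonneg p hp _ _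

lemma Jt_marg {Ω β : Type} [Fintype Ω] [Fintype β] (p : Ω → ℝ)
    (X : Ω → ZMod 2) (Y : Ω → β) (y) : Jt p X Y 0 y + Jt p X Y 1 y = push p Y y := by
  unfold Jt push
  rw [← Finset.sum_add_distrib]
  apply Finset.sum_congr rfl
  intro a _
  rcases zcases (X a) with h | h <;> by_cases hy : Y a = y <;> simp [h, hy]

lemma Jt_sum {Ω β : Type} [Fintype Ω] [Fintype β] (p : Ω → ℝ)
    (X : Ω → ZMod 2) (Y : Ω → β) : ∑ y, (Jt p X Y 0 y + Jt p X Y 1 y) = ∑ a, p a := by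
  simp_rw [Jt_marg]
  exact push_sum p Y

lemma Fn_kernel {Ω β γ : Type} [Fintype Ω] [Fintype β] [Fintype γ] (φ : ℝ → ℝ → ℝ)
    (hφ : φ 0 0 = 0) (p : Ω → ℝ) (X : Ω → ZMod 2) (f : Ω → β)
    (g : Ω → γ) (hk : ∀ x y, f x = f y ↔ g x = g y) :
    Fn φ p X f = Fn φ p X g := by
  unfold Fn
  have hz : ∀ {δ : Type} [Fintype δ] (f : Ω → δ) (b : δ) (x : ZMod 2), b ∉ Set.range f →
      Jt p X f x b = 0 := by
    intro δ _ f b x hb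
    apply push_zero
    rintro ⟨a, ha⟩
    exact hb ⟨a, (Prod.ext_iff.1 ha).2⟩
  apply sum_kernel f g hk
  · intro b hb; rw [hz f b 0 hb, hz f b 1 hb, hφ]
  · intro b hb; rw [hz g b 0 hb, hz g b 1 hb, hφ]
  · intro a
    have : ∀ x, Jt p X f x (f a) = Jt p X g x (g a) := by
      intro x
      unfold Jt push
      apply Finset.sum_congr rfl
      intro a' _
      simp only [Prod.mk.injEq, hk a' a]
    rw [this, this]

lemma Fn_equiv {Ω Ω' β : Type} [Fintype Ω] [Fintype Ω'] [Fintype β] (φ : ℝ → ℝ → ℝ)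
    (p : Ω → ℝ) (p' : Ω' → ℝ)
    (e : Ω ≃ Ω') (h : ∀ ω, p ω = p' (e ω)) (X : Ω' → ZMod 2) (Y : Ω' → β) :
    Fn φ p (fun ω => X (e ω)) (fun ω => Y (e ω)) = Fn φ p' X Y := by
  unfold Fn Jt
  rw [push_equiv p p' e h (fun ω => (X ω, Y ω))]

/-- product weights -/
def pp {Ω : Type} (p : Ω → ℝ) (w : Ω × Ω) : ℝ := p w.1 * p w.2

lemma Jt_plus {Ω β : Type} [Fintype Ω] [Fintype β] (p : Ω → ℝ) (X : Ω → ZMod 2) (Y : Ω → β)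
    (v u : ZMod 2) (y1 y2 : β) :
    Jt (pp p) (fun w => X w.2) (fun w => (X w.1 + X w.2, Y w.1, Y w.2)) v (u, y1, y2)
      = Jt p X Y (u + v) y1 * Jt p X Y v y2 := by
  unfold Jt push
  rw [Finset.sum_mul_sum, Fintype.sum_prod_type]
  apply Finset.sum_congr rfl
  intro a _
  apply Finset.sum_congr rfl
  intro b _
  have key : ∀ x1 x2 : ZMod 2, (x2 = v ∧ x1 + x2 = u) ↔ (x1 = u + v ∧ x2 = v) := by
    revert u v; decide
  have := key (X a) (X b)
  by_cases h1 : X b = v ∧ X a + X b = u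
  · obtain ⟨h3, h4⟩ := this.1 h1
    by_cases hy1 : Y a = y1 <;> by_cases hy2 : Y b = y2 <;> simp [h1.1, h3, hy1, hy2, pp]
    intro h5
    exact absurd (by rw [← h3, ← h4]; exact h1.2) h5
  · have h2 : ¬ (X a = u + v ∧ X b = v) := fun h => h1 (this.2 h)
    have e1 : ¬ ((X b, X a + X b, Y a, Y b) = (v, u, y1, y2)) := by
      intro h; simp only [Prod.mk.injEq] at h; exact h1 ⟨h.1, h.2.1⟩
    rw [if_neg e1]
    by_cases h5 : X a = u + v
    · have : ¬ (X b, Y b) = (v, y2) := by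
        intro h; simp only [Prod.mk.injEq] at h; exact h2 ⟨h5, h.1⟩
      rw [if_neg this, mul_zero]
    · have : ¬ (X a, Y a) = (u + v, y1) := by
        intro h; simp only [Prod.mk.injEq] at h; exact h5 h.1
      rw [if_neg this, zero_mul]

lemma Jt_minus {Ω β : Type} [Fintype Ω] [Fintype β] (p : Ω → ℝ) (X : Ω → ZMod 2) (Y : Ω → β)
    (u : ZMod 2) (y1 y2 : β) :
    Jt (pp p) (fun w => X w.1 + X w.2) (fun w => (Y w.1, Y w.2)) u (y1, y2)
      = Jt p X Y u y1 * Jt p X Y 0 y2 + Jt p X Y (u + 1) y1 * Jt p X Y 1 y2 := by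
  have h0 := Jt_plus p X Y 0 u y1 y2
  have h1 := Jt_plus p X Y 1 u y1 y2
  rw [add_zero] at h0
  rw [← h0, ← h1, Jt_marg]
  unfold Jt push
  rfl

/-- Bhattacharyya -/
def phiZ (a b : ℝ) : ℝ := 2 * √(a * b)
/-- variation -/
def phiT (a b : ℝ) : ℝ := |a - b|
/-- entropy -/
def phiH (a b : ℝ) : ℝ :=
  (a + b) * Real.logb 2 (a + b) - a * Real.logb 2 a - b * Real.logb 2 b

lemma z2_11 : (1 : ZMod 2) + 1 = 0 := by decide

lemma Z_plus {Ω β : Type} [Fintype Ω] [Fintype β] (p : Ω → ℝ) (hp : ∀ a, 0 ≤ p a)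
    (X : Ω → ZMod 2) (Y : Ω → β) :
    Fn phiZ (pp p) (fun w => X w.2) (fun w => (X w.1 + X w.2, Y w.1, Y w.2))
      = Fn phiZ p X Y ^ 2 := by
  unfold Fn
  rw [Fintype.sum_prod_type, zsum, sq, Finset.sum_mul_sum, Fintype.sum_prod_type,
    Fintype.sum_prod_type, ← Finset.sum_add_distrib]
  apply Finset.sum_congr rfl
  intro y1 _
  rw [← Finset.sum_add_distrib]
  apply Finset.sum_congr rfl
  intro y2 _
  simp only [Jt_plus, add_zero, zero_add, z2_11, phiZ]
  have h := fun x y => Jt_nonneg p hp X Y x y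
  set a := Jt p X Y 0 y1
  set b := Jt p X Y 1 y1
  set c := Jt p X Y 0 y2
  set d := Jt p X Y 1 y2
  have ha : 0 ≤ a := h _ _
  have hb : 0 ≤ b := h _ _
  rw [show a * c * (b * d) = (a * b) * (c * d) by ring,
    show b * c * (a * d) = (a * b) * (c * d) by ring, Real.sqrt_mul (mul_nonneg ha hb)]
  ring

lemma T_minus {Ω β : Type} [Fintype Ω] [Fintype β] (p : Ω → ℝ)
    (X : Ω → ZMod 2) (Y : Ω → β) :
    Fn phiT (pp p) (fun w => X w.1 + X w.2) (fun w => (Y w.1, Y w.2))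
      = Fn phiT p X Y ^ 2 := by
  unfold Fn
  rw [sq, Finset.sum_mul_sum, Fintype.sum_prod_type]
  apply Finset.sum_congr rfl
  intro y1 _
  apply Finset.sum_congr rfl
  intro y2 _
  simp only [Jt_minus, zero_add, z2_11, phiT]
  rw [← abs_mul]
  congr 1; ring

lemma Z_minus_pt (a b c d : ℝ) (ha : 0 ≤ a) (hb : 0 ≤ b) (hc : 0 ≤ c) (hd : 0 ≤ d) :
    phiZ (a * c + b * d) (b * c + a * d) ≤
      phiZ a b * (c + d) + (a + b) * phiZ c d - phiZ a b * phiZ c d := by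
  unfold phiZ
  have hx := Real.sqrt_nonneg (a * b)
  have hy := Real.sqrt_nonneg (c * d)
  have hx2 := Real.sq_sqrt (mul_nonneg ha hb)
  have hy2 := Real.sq_sqrt (mul_nonneg hc hd)
  set x := √(a * b)
  set y := √(c * d)
  have hxa : 2 * x ≤ a + b := by
    apply abs_le_of_sq_le_sq' _ (by linarith) |>.2
    nlinarith [sq_nonneg (a - b)]
  have hyc : 2 * y ≤ c + d := by
    apply abs_le_of_sq_le_sq' _ (by linarith) |>.2
    nlinarith [sq_nonneg (c - d)]
  have : √((a * c + b * d) * (b * c + a * d)) ≤ x * (c + d) + (a + b) * y - 2 * x * y := by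
    apply Real.sqrt_le_iff.2
    constructor
    · nlinarith [mul_nonneg hx (sub_nonneg.2 hyc), mul_nonneg hy (add_nonneg ha hb)]
    · have e : (a * c + b * d) * (b * c + a * d)
          = x ^ 2 * ((c + d) ^ 2 - 2 * y ^ 2) + ((a + b) ^ 2 - 2 * x ^ 2) * y ^ 2 := by
        rw [hx2, hy2]; ring
      rw [e]
      have hk : 0 ≤ x * y * ((a + b - 2 * x) * (c + d - 2 * y)) :=
        mul_nonneg (mul_nonneg hx hy) (mul_nonneg (by linarith) (by linarith))
      nlinarith
  linarith

lemma T_plus_pt (a b c d : ℝ) (ha : 0 ≤ a) (hb : 0 ≤ b) (hc : 0 ≤ c) (hd : 0 ≤ d) :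
    |a * c - b * d| + |b * c - a * d| ≤
      |a - b| * (c + d) + (a + b) * |c - d| - |a - b| * |c - d| := by
  rcases abs_cases (a * c - b * d) with ⟨h1, _⟩ | ⟨h1, _⟩ <;>
  rcases abs_cases (b * c - a * d) with ⟨h2, _⟩ | ⟨h2, _⟩ <;>
  rcases abs_cases (a - b) with ⟨h3, _⟩ | ⟨h3, _⟩ <;>
  rcases abs_cases (c - d) with ⟨h4, _⟩ | ⟨h4, _⟩ <;>
  rw [h1, h2, h3, h4] <;> nlinarith

lemma sum_prod_aux {β : Type} [Fintype β] (f g : β → ℝ) :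
    ∑ y1, ∑ y2, f y1 * g y2 = (∑ y, f y) * ∑ y, g y := (Finset.sum_mul_sum _ _ _ _).symm

lemma Z_minus {Ω β : Type} [Fintype Ω] [Fintype β] (p : Ω → ℝ) (hp : IsPMF p)
    (X : Ω → ZMod 2) (Y : Ω → β) :
    Fn phiZ (pp p) (fun w => X w.1 + X w.2) (fun w => (Y w.1, Y w.2))
      ≤ 2 * Fn phiZ p X Y - Fn phiZ p X Y ^ 2 := by
  have hs := Jt_sum p X Y
  rw [hp.2] at hs
  have e : 2 * Fn phiZ p X Y - Fn phiZ p X Y ^ 2 = ∑ y1, ∑ y2,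
      (phiZ (Jt p X Y 0 y1) (Jt p X Y 1 y1) * (Jt p X Y 0 y2 + Jt p X Y 1 y2)
        + (Jt p X Y 0 y1 + Jt p X Y 1 y1) * phiZ (Jt p X Y 0 y2) (Jt p X Y 1 y2)
        - phiZ (Jt p X Y 0 y1) (Jt p X Y 1 y1) * phiZ (Jt p X Y 0 y2) (Jt p X Y 1 y2)) := by
    simp only [Finset.sum_sub_distrib, Finset.sum_add_distrib]
    rw [sum_prod_aux (fun y => phiZ (Jt p X Y 0 y) (Jt p X Y 1 y))
        (fun y => Jt p X Y 0 y + Jt p X Y 1 y),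
      sum_prod_aux (fun y => Jt p X Y 0 y + Jt p X Y 1 y)
        (fun y => phiZ (Jt p X Y 0 y) (Jt p X Y 1 y)),
      sum_prod_aux (fun y => phiZ (Jt p X Y 0 y) (Jt p X Y 1 y)), hs]
    unfold Fn
    ring
  rw [e]
  unfold Fn
  rw [Fintype.sum_prod_type]
  apply Finset.sum_le_sum
  intro y1 _
  apply Finset.sum_le_sum
  intro y2 _
  simp only [Jt_minus, zero_add, z2_11]
  have h := fun x y => Jt_nonneg p hp.1 X Y x y
  exact Z_minus_pt _ _ _ _ (h _ _) (h _ _) (h _ _) (h _ _)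

lemma T_plus {Ω β : Type} [Fintype Ω] [Fintype β] (p : Ω → ℝ) (hp : IsPMF p)
    (X : Ω → ZMod 2) (Y : Ω → β) :
    Fn phiT (pp p) (fun w => X w.2) (fun w => (X w.1 + X w.2, Y w.1, Y w.2))
      ≤ 2 * Fn phiT p X Y - Fn phiT p X Y ^ 2 := by
  have hs := Jt_sum p X Y
  rw [hp.2] at hs
  have e : 2 * Fn phiT p X Y - Fn phiT p X Y ^ 2 = ∑ y1, ∑ y2,
      (phiT (Jt p X Y 0 y1) (Jt p X Y 1 y1) * (Jt p X Y 0 y2 + Jt p X Y 1 y2)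
        + (Jt p X Y 0 y1 + Jt p X Y 1 y1) * phiT (Jt p X Y 0 y2) (Jt p X Y 1 y2)
        - phiT (Jt p X Y 0 y1) (Jt p X Y 1 y1) * phiT (Jt p X Y 0 y2) (Jt p X Y 1 y2)) := by
    simp only [Finset.sum_sub_distrib, Finset.sum_add_distrib]
    rw [sum_prod_aux (fun y => phiT (Jt p X Y 0 y) (Jt p X Y 1 y))
        (fun y => Jt p X Y 0 y + Jt p X Y 1 y),
      sum_prod_aux (fun y => Jt p X Y 0 y + Jt p X Y 1 y)
        (fun y => phiT (Jt p X Y 0 y) (Jt p X Y 1 y)),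
      sum_prod_aux (fun y => phiT (Jt p X Y 0 y) (Jt p X Y 1 y)), hs]
    unfold Fn
    ring
  rw [e]
  unfold Fn
  rw [Fintype.sum_prod_type, zsum, Fintype.sum_prod_type,
    Fintype.sum_prod_type, ← Finset.sum_add_distrib]
  apply Finset.sum_le_sum
  intro y1 _
  rw [← Finset.sum_add_distrib]
  apply Finset.sum_le_sum
  intro y2 _
  simp only [Jt_plus, add_zero, zero_add, z2_11]
  have h := fun x y => Jt_nonneg p hp.1 X Y x y
  exact T_plus_pt _ _ _ _ (h _ _) (h _ _) (h _ _) (h _ _)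

lemma ZT_le {Ω β : Type} [Fintype Ω] [Fintype β] (p : Ω → ℝ) (hp : IsPMF p)
    (X : Ω → ZMod 2) (Y : Ω → β) :
    Fn phiZ p X Y ^ 2 + Fn phiT p X Y ^ 2 ≤ 1 := by
  have hs := Jt_sum p X Y
  rw [hp.2] at hs
  have h := fun x y => Jt_nonneg p hp.1 X Y x y
  have key := norm_sum_le Finset.univ
    (fun y => (⟨phiZ (Jt p X Y 0 y) (Jt p X Y 1 y), phiT (Jt p X Y 0 y) (Jt p X Y 1 y)⟩ : ℂ))
  have e1 : ∀ y, ‖(⟨phiZ (Jt p X Y 0 y) (Jt p X Y 1 y),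
      phiT (Jt p X Y 0 y) (Jt p X Y 1 y)⟩ : ℂ)‖ = Jt p X Y 0 y + Jt p X Y 1 y := by
    intro y
    have h0 := h 0 y
    have h1 := h 1 y
    rw [Complex.norm_def, Real.sqrt_eq_iff_mul_self_eq (Complex.normSq_nonneg _) (by linarith),
      Complex.normSq_mk]
    unfold phiZ phiT
    have := Real.mul_self_sqrt (mul_nonneg h0 h1)
    have h3 := abs_mul_abs_self (Jt p X Y 0 y - Jt p X Y 1 y)
    nlinarith
  simp_rw [e1, hs] at key
  rw [Complex.norm_def, Real.sqrt_le_one, Complex.normSq_apply, Complex.re_sum, Complex.im_sum] at key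
  unfold Fn
  nlinarith

/-! ### Entropy inequalities -/

lemma log2_half : (1 / 2 : ℝ) ≤ Real.log 2 := by linarith [Real.log_two_gt_d9]

lemma phiH_eq (a b : ℝ) : phiH a b =
    ((a + b) * Real.log (a + b) - a * Real.log a - b * Real.log b) / Real.log 2 := by
  unfold phiH Real.logb
  ring

lemma xlog_le (x y : ℝ) (hx : 0 < x) (hy : 0 < y) :
    x * (Real.log y - Real.log x) ≤ y - x := by
  rw [← Real.log_div hy.ne' hx.ne']
  have := Real.log_le_sub_one_of_pos (div_pos hy hx)
  calc _ ≤ x * (y / x - 1) := mul_le_mul_of_nonneg_left this hx.le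
    _ = _ := by field_simp

lemma phi_gibbs_aux (a s A S : ℝ) (ha : 0 ≤ a) (has : a ≤ s) (haA : a ≤ A) (hAS : A ≤ S) :
    a * (Real.log s - Real.log a) ≤ a * (Real.log S - Real.log A) + (s * (A / S) - a) := by
  rcases ha.eq_or_lt with rfl | ha
  · have : 0 ≤ s * (A / S) := mul_nonneg has (div_nonneg haA (haA.trans hAS))
    simp only [zero_mul]; linarith
  · have hs : 0 < s := by linarith
    have hA : 0 < A := by linarith
    have hS : 0 < S := by linarith
    have h := xlog_le a (s * (A / S)) ha (by positivity)
    rw [Real.log_mul hs.ne' (by positivity), Real.log_div hA.ne' hS.ne'] at h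
    nlinarith

lemma phi_gibbs (a b A B : ℝ) (ha : 0 ≤ a) (hb : 0 ≤ b) (hA : a ≤ A) (hB : b ≤ B) :
    (a + b) * Real.log (a + b) - a * Real.log a - b * Real.log b ≤
      a * (Real.log (A + B) - Real.log A) + b * (Real.log (A + B) - Real.log B) := by
  have h1 := phi_gibbs_aux a (a + b) A (A + B) ha (by linarith) hA (by linarith)
  have h2 := phi_gibbs_aux b (a + b) B (A + B) hb (by linarith) hB (by linarith)
  have h3 : (a + b) * (A / (A + B)) + (a + b) * (B / (A + B)) ≤ a + b := by
    rw [← mul_add, ← add_div]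
    exact mul_le_of_le_one_right (by linarith) (div_self_le_one _)
  nlinarith

lemma phiH_superadd (a b c d : ℝ) (ha : 0 ≤ a) (hb : 0 ≤ b) (hc : 0 ≤ c) (hd : 0 ≤ d) :
    phiH a b + phiH c d ≤ phiH (a + c) (b + d) := by
  simp only [phiH_eq, ← add_div]
  apply div_le_div_of_nonneg_right _ (Real.log_nonneg (by norm_num))
  have h1 := phi_gibbs a b (a + c) (b + d) ha hb (by linarith) (by linarith)
  have h2 := phi_gibbs c d (a + c) (b + d) hc hd (by linarith) (by linarith)
  nlinarith

lemma phiH_zero : phiH 0 0 = 0 := by simp [phiH]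

lemma phiH_sum {ι : Type} (s : Finset ι) (a b : ι → ℝ) (ha : ∀ i, 0 ≤ a i) (hb : ∀ i, 0 ≤ b i) :
    ∑ i ∈ s, phiH (a i) (b i) ≤ phiH (∑ i ∈ s, a i) (∑ i ∈ s, b i) := by
  induction s using Finset.induction_on with
  | empty => simp [phiH_zero]
  | insert i s hi ih =>
    rw [Finset.sum_insert hi, Finset.sum_insert hi, Finset.sum_insert hi]
    have := phiH_superadd (a i) (b i) (∑ i ∈ s, a i) (∑ i ∈ s, b i) (ha i) (hb i)
      (Finset.sum_nonneg fun i _ => ha i) (Finset.sum_nonneg fun i _ => hb i)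
    linarith

lemma phiH_nonneg (a b : ℝ) (ha : 0 ≤ a) (hb : 0 ≤ b) : 0 ≤ phiH a b := by
  rw [phiH_eq]
  apply div_nonneg _ (Real.log_nonneg (by norm_num))
  have key : ∀ x y : ℝ, 0 ≤ x → 0 ≤ y → x * Real.log x ≤ x * Real.log (x + y) := by
    intro x y hx hy
    rcases hx.eq_or_lt with rfl | hx
    · simp
    · exact mul_le_mul_of_nonneg_left (Real.log_le_log hx (by linarith)) hx.le
  have h1 := key a b ha hb
  have h2 := key b a hb ha
  rw [add_comm b a] at h2
  nlinarith

lemma phiH_le_add (a b : ℝ) (ha : 0 ≤ a) (hb : 0 ≤ b) : phiH a b ≤ a + b := by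
  rw [phiH_eq, div_le_iff₀ (Real.log_pos (by norm_num))]
  rcases (add_nonneg ha hb).eq_or_lt with h | h
  · have h1 : a = 0 := by linarith
    have h2 : b = 0 := by linarith
    simp [h1, h2]
  · have h1 := phi_gibbs a b (a + b) (a + b) ha hb (by linarith) (by linarith)
    rw [← two_mul, Real.log_mul (by norm_num) h.ne'] at h1
    nlinarith

lemma phiH_le_Z (a b : ℝ) (ha : 0 ≤ a) (hb : 0 ≤ b) : phiH a b ≤ 4 * phiZ a b := by
  have key : ∀ x y : ℝ, 0 ≤ x → 0 ≤ y →
      x * Real.log (x + y) - x * Real.log x ≤ 2 * √(x * y) := by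
    intro x y hx hy
    rcases hx.eq_or_lt with rfl | hx
    · simp
    · have e : Real.log (x + y) - Real.log x = Real.log (1 + y / x) := by
        rw [← Real.log_div (by linarith) hx.ne', add_div, div_self hx.ne']
      have hr : 0 ≤ y / x := div_nonneg hy hx.le
      have h0 := Real.sqrt_nonneg (y / x)
      have h1 : Real.log (1 + y / x) ≤ 2 * √(y / x) := by
        calc _ ≤ Real.log ((1 + √(y / x)) ^ 2) := by
              apply Real.log_le_log (by linarith)
              nlinarith [Real.sq_sqrt hr]
          _ = 2 * Real.log (1 + √(y / x)) := by rw [Real.log_pow]; norm_num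
          _ ≤ 2 * √(y / x) := by
              have := Real.log_le_sub_one_of_pos (show 0 < 1 + √(y / x) by linarith)
              linarith
      have h2 : x * √(y / x) = √(x * y) := by
        rw [show x * y = x ^ 2 * (y / x) by field_simp, Real.sqrt_mul (by positivity),
          Real.sqrt_sq hx.le]
      calc _ = x * (Real.log (x + y) - Real.log x) := by ring
        _ ≤ x * (2 * √(y / x)) := by rw [e]; exact mul_le_mul_of_nonneg_left h1 hx.le
        _ = _ := by rw [← h2]; ring
  rw [phiH_eq, div_le_iff₀ (Real.log_pos (by norm_num))]
  have h1 := key a b ha hb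
  have h2 := key b a hb ha
  rw [add_comm b a, mul_comm b a] at h2
  unfold phiZ
  have h3 := Real.sqrt_nonneg (a * b)
  have h4 := log2_half
  nlinarith

lemma phiH_ge_T (a b : ℝ) (ha : 0 ≤ a) (hb : 0 ≤ b) : a + b - phiH a b ≤ 2 * phiT a b := by
  have hl := log2_half
  have hl0 : 0 < Real.log 2 := by linarith
  have hT : 0 ≤ |a - b| := abs_nonneg _
  suffices h : (a + b) * Real.log 2 - ((a + b) * Real.log (a + b) - a * Real.log a - b * Real.log b)
      ≤ |a - b| by
    have e : a + b - phiH a b = ((a + b) * Real.log 2 -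
        ((a + b) * Real.log (a + b) - a * Real.log a - b * Real.log b)) / Real.log 2 := by
      rw [phiH_eq]; field_simp
    rw [e, div_le_iff₀ hl0]
    unfold phiT
    nlinarith
  rcases (add_nonneg ha hb).eq_or_lt with h | h
  · have h1 : a = 0 := by linarith
    have h2 : b = 0 := by linarith
    simp [h1, h2]
  · have key : ∀ x : ℝ, 0 ≤ x → x * Real.log 2 + x * Real.log x - x * Real.log (a + b) ≤
        x * (2 * x / (a + b) - 1) := by
      intro x hx
      rcases hx.eq_or_lt with rfl | hx
      · simp
      · have := Real.log_le_sub_one_of_pos (show 0 < 2 * x / (a + b) by positivity)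
        rw [Real.log_div (by positivity) h.ne', Real.log_mul (by norm_num) hx.ne'] at this
        nlinarith
    have h1 := key a ha
    have h2 := key b hb
    have h3 : a * (2 * a / (a + b) - 1) + b * (2 * b / (a + b) - 1) ≤ |a - b| := by
      have e : a * (2 * a / (a + b) - 1) + b * (2 * b / (a + b) - 1)
          = |a - b| * |a - b| / (a + b) := by
        rw [abs_mul_abs_self]; field_simp; ring
      rw [e, div_le_iff₀ h]
      apply mul_le_mul_of_nonneg_left _ hT
      rw [abs_le]; constructor <;> linarith
    linarith

lemma Fn_H_eq {Ω β : Type} [Fintype Ω] [Fintype β] (p : Ω → ℝ) (X : Ω → ZMod 2) (Y : Ω → β) :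
    Fn phiH p X Y = Hsh (push p fun ω => (X ω, Y ω)) - Hsh (push p Y) := by
  unfold Hsh Fn
  rw [Fintype.sum_prod_type, zsum]
  have : ∀ y, push p Y y = Jt p X Y 0 y + Jt p X Y 1 y := fun y => (Jt_marg p X Y y).symm
  simp_rw [this]
  unfold phiH Jt
  rw [Finset.sum_sub_distrib, Finset.sum_sub_distrib]
  ring

lemma Fn_H_mono {Ω β γ : Type} [Fintype Ω] [Fintype β] [Fintype γ] (p : Ω → ℝ)
    (hp : ∀ a, 0 ≤ p a) (X : Ω → ZMod 2) (Y : Ω → β) (g : β → γ) :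
    Fn phiH p X Y ≤ Fn phiH p X (fun ω => g (Y ω)) := by
  have hJ : ∀ x z, Jt p X (fun ω => g (Y ω)) x z = ∑ y, if g y = z then Jt p X Y x y else 0 := by
    intro x z
    have := push_push p (fun ω => (X ω, Y ω)) (fun b => (b.1, g b.2))
    unfold Jt
    rw [← this]
    conv_lhs => unfold push
    rw [Fintype.sum_prod_type, Finset.sum_comm]
    apply Finset.sum_congr rfl
    intro y _
    rw [Finset.sum_eq_single x]
    · simp only [Prod.mk.injEq, true_and, push]
    · intro b _ hb; rw [if_neg]; intro h; exact hb (Prod.ext_iff.1 h).1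
    · simp
  unfold Fn
  calc _ = ∑ z, ∑ y, phiH (if g y = z then Jt p X Y 0 y else 0)
        (if g y = z then Jt p X Y 1 y else 0) := by
        rw [Finset.sum_comm]
        apply Finset.sum_congr rfl
        intro y _
        rw [Finset.sum_eq_single (g y)]
        · simp
        · intro z _ hz
          rw [if_neg (Ne.symm hz), if_neg (Ne.symm hz), phiH_zero]
        · simp
    _ ≤ _ := by
        apply Finset.sum_le_sum
        intro z _
        rw [hJ, hJ]
        apply phiH_sum
        · intro y; split_ifs
          · exact Jt_nonneg p hp _ _ _ _
          · exact le_rfl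
        · intro y; split_ifs
          · exact Jt_nonneg p hp _ _ _ _
          · exact le_rfl

lemma iid_pmf {α : Type} [Fintype α] (p : α → ℝ) (hp : IsPMF p) (n : ℕ) : IsPMF (iid p n) := by
  constructor
  · intro x; exact Finset.prod_nonneg fun i _ => hp.1 _
  · unfold iid
    rw [← Fintype.prod_sum (fun (_ : Fin n) a => p a)]
    simp [hp.2]

lemma Hsh_iid {α : Type} [Fintype α] (p : α → ℝ) (hp : IsPMF p) (n : ℕ) :
    Hsh (iid p n) = n * Hsh p := by
  have h1 : ∀ x : Fin n → α, iid p n x * Real.logb 2 (iid p n x) =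
      ∑ j, ∏ i, (p (x i) * if i = j then Real.logb 2 (p (x i)) else 1) := by
    intro x
    have e : ∀ j, ∏ i, (p (x i) * if i = j then Real.logb 2 (p (x i)) else 1) =
        iid p n x * Real.logb 2 (p (x j)) := by
      intro j
      rw [Finset.prod_mul_distrib, Finset.prod_ite_eq' Finset.univ j]
      simp [iid]
    simp_rw [e, ← Finset.mul_sum]
    by_cases h0 : iid p n x = 0
    · simp [h0]
    · congr 1
      unfold iid Real.logb
      rw [Real.log_prod, Finset.sum_div]
      intro i _
      exact fun h => h0 (Finset.prod_eq_zero (Finset.mem_univ i) h)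
  unfold Hsh
  simp_rw [h1]
  rw [Finset.sum_comm]
  have h2 : ∀ j : Fin n, ∑ x : Fin n → α,
      ∏ i, (p (x i) * if i = j then Real.logb 2 (p (x i)) else 1) =
      ∑ a, p a * Real.logb 2 (p a) := by
    intro j
    rw [← Fintype.prod_sum (fun (i : Fin n) a => p a * if i = j then Real.logb 2 (p a) else 1)]
    rw [Finset.prod_eq_single j]
    · simp
    · intro i _ hi
      simp [hi, hp.2]
    · simp
  simp_rw [h2]
  simp


/-! ### The polar transform -/

/-- index splitting -/
def Esp (n : ℕ) : Fin (2 ^ n) × Fin 2 ≃ Fin (2 ^ (n + 1)) :=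
  finProdFinEquiv.trans (finCongr (pow_succ 2 n).symm)

lemma Esp_val (n : ℕ) (i : Fin (2 ^ n)) (j : Fin 2) : (Esp n (i, j) : ℕ) = 2 * i + j := by
  simp [Esp, finProdFinEquiv]; ring

/-- splitting of a vector into even and odd positions -/
def spl (n : ℕ) : (Fin (2 ^ (n + 1)) → ZMod 2) ≃ (Fin (2 ^ n) → ZMod 2) × (Fin (2 ^ n) → ZMod 2) where
  toFun x := (fun i => x (Esp n (i, 0)), fun i => x (Esp n (i, 1)))
  invFun w k := if ((Esp n).symm k).2 = 0 then w.1 ((Esp n).symm k).1 else w.2 ((Esp n).symm k).1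
  left_inv x := by
    funext k
    obtain ⟨⟨i, j⟩, rfl⟩ := (Esp n).surjective k
    simp only [Equiv.symm_apply_apply]
    fin_cases j <;> simp
  right_inv w := by
    ext i <;> simp

lemma iid_spl (pX : ZMod 2 → ℝ) (n : ℕ) (x : Fin (2 ^ (n + 1)) → ZMod 2) :
    iid pX (2 ^ (n + 1)) x = pp (iid pX (2 ^ n)) (spl n x) := by
  unfold iid pp
  rw [← Equiv.prod_comp (Esp n), Fintype.prod_prod_type]
  simp only [Fin.prod_univ_two, Finset.prod_mul_distrib]
  rfl

/-- polar output, extended by zero -/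
def Av (n : ℕ) (x : Fin (2 ^ n) → ZMod 2) (i : ℕ) : ZMod 2 :=
  if h : i < 2 ^ n then Matrix.vecMul x (polarG n) ⟨i, h⟩ else 0

lemma Av_fin (n : ℕ) (x : Fin (2 ^ n) → ZMod 2) (i : Fin (2 ^ n)) :
    Av n x i = Matrix.vecMul x (polarG n) i := by
  simp [Av]

lemma vecMul_Esp (n : ℕ) (x : Fin (2 ^ (n + 1)) → ZMod 2) (i : Fin (2 ^ n)) (j : Fin 2) :
    Matrix.vecMul x (polarG (n + 1)) (Esp n (i, j)) =
      ∑ i', (x (Esp n (i', 0)) * (polarG n i' i * (Matrix.of ![![1, 0], ![1, 1]] : Matrix (Fin 2) (Fin 2) (ZMod 2)) 0 j)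
        + x (Esp n (i', 1)) * (polarG n i' i * (Matrix.of ![![1, 0], ![1, 1]] : Matrix (Fin 2) (Fin 2) (ZMod 2)) 1 j)) := by
  have hG : ∀ i' j', polarG (n + 1) (Esp n (i', j')) (Esp n (i, j)) =
      polarG n i' i * (Matrix.of ![![1, 0], ![1, 1]] : Matrix (Fin 2) (Fin 2) (ZMod 2)) j' j := by
    intro i' j'
    have : polarG (n + 1) = Matrix.reindex (Esp n) (Esp n)
      (Matrix.kroneckerMap (· * ·) (polarG n) (Matrix.of ![![1, 0], ![1, 1]])) := rfl
    rw [this]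
    simp only [Matrix.reindex_apply, Matrix.submatrix_apply, Equiv.symm_apply_apply,
      Matrix.kroneckerMap_apply]
  unfold Matrix.vecMul dotProduct
  rw [← Equiv.sum_comp (Esp n), Fintype.sum_prod_type]
  apply Finset.sum_congr rfl
  intro i' _
  rw [Fin.sum_univ_two, ← hG i' 0, ← hG i' 1]

lemma Av_even (n : ℕ) (x : Fin (2 ^ (n + 1)) → ZMod 2) (i : ℕ) :
    Av (n + 1) x (2 * i) = Av n (spl n x).1 i + Av n (spl n x).2 i := by
  by_cases h : i < 2 ^ n
  · have h' : (2 * i) = (Esp n (⟨i, h⟩, 0) : ℕ) := by rw [Esp_val]; simp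
    rw [h', Av_fin, vecMul_Esp, Finset.sum_add_distrib]
    simp [Av, h, Matrix.vecMul, dotProduct, spl]
  · have h' : ¬ 2 * i < 2 ^ (n + 1) := by rw [pow_succ]; omega
    simp [Av, h, h']

lemma Av_odd (n : ℕ) (x : Fin (2 ^ (n + 1)) → ZMod 2) (i : ℕ) :
    Av (n + 1) x (2 * i + 1) = Av n (spl n x).2 i := by
  by_cases h : i < 2 ^ n
  · have h' : (2 * i + 1) = (Esp n (⟨i, h⟩, 1) : ℕ) := by rw [Esp_val]; simp
    rw [h', Av_fin, vecMul_Esp, Finset.sum_add_distrib]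
    simp [Av, h, Matrix.vecMul, dotProduct, spl]
  · have h' : ¬ 2 * i + 1 < 2 ^ (n + 1) := by rw [pow_succ]; omega
    simp [Av, h, h']

/-- initial part of the polar output -/
def pre (n l : ℕ) (x : Fin (2 ^ n) → ZMod 2) (j : Fin l) : ZMod 2 := Av n x j

lemma pre_eq_iff (n l : ℕ) (x y : Fin (2 ^ n) → ZMod 2) :
    pre n l x = pre n l y ↔ ∀ j < l, Av n x j = Av n y j := by
  constructor
  · intro h j hj
    exact congrFun h ⟨j, hj⟩
  · intro h
    funext j
    exact h j j.2

lemma pre_even (n i : ℕ) (x y : Fin (2 ^ (n + 1)) → ZMod 2) :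
    pre (n + 1) (2 * i) x = pre (n + 1) (2 * i) y ↔
      (pre n i (spl n x).1, pre n i (spl n x).2) = (pre n i (spl n y).1, pre n i (spl n y).2) := by
  rw [Prod.mk.injEq, pre_eq_iff, pre_eq_iff, pre_eq_iff]
  constructor
  · intro h
    have h2 : ∀ j < i, Av n (spl n x).2 j = Av n (spl n y).2 j := by
      intro j hj
      have := h (2 * j + 1) (by omega)
      rwa [Av_odd, Av_odd] at this
    refine ⟨?_, h2⟩
    intro j hj
    have := h (2 * j) (by omega)
    rw [Av_even, Av_even, h2 j hj] at this
    exact add_right_cancel this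
  · rintro ⟨h1, h2⟩ j hj
    rcases Nat.even_or_odd' j with ⟨k, rfl | rfl⟩
    · rw [Av_even, Av_even, h1 k (by omega), h2 k (by omega)]
    · rw [Av_odd, Av_odd, h2 k (by omega)]

lemma pre_succ (n l : ℕ) (x y : Fin (2 ^ n) → ZMod 2) :
    pre n (l + 1) x = pre n (l + 1) y ↔ (Av n x l, pre n l x) = (Av n y l, pre n l y) := by
  rw [Prod.mk.injEq, pre_eq_iff, pre_eq_iff]
  constructor
  · intro h
    exact ⟨h l (by omega), fun j hj => h j (by omega)⟩
  · rintro ⟨h1, h2⟩ j hj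
    rcases Nat.lt_succ_iff_lt_or_eq.1 hj with h | rfl
    · exact h2 j h
    · exact h1

/-- the functional at level `n`, index `i` -/
def Lv (pX : ZMod 2 → ℝ) (φ : ℝ → ℝ → ℝ) (s : ℕ × ℕ) : ℝ :=
  Fn φ (iid pX (2 ^ s.1)) (fun x => Av s.1 x s.2) (pre s.1 s.2)

lemma Lv_even (pX : ZMod 2 → ℝ) (φ : ℝ → ℝ → ℝ) (hφ : φ 0 0 = 0) (n i : ℕ) :
    Lv pX φ (n + 1, 2 * i) = Fn φ (pp (iid pX (2 ^ n))) (fun w => Av n w.1 i + Av n w.2 i)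
      (fun w => (pre n i w.1, pre n i w.2)) := by
  rw [← Fn_equiv φ (iid pX (2 ^ (n + 1))) _ (spl n) (iid_spl pX n)]
  unfold Lv
  simp only [Av_even]
  exact Fn_kernel φ hφ _ _ _ _ (pre_even n i)

lemma Lv_odd (pX : ZMod 2 → ℝ) (φ : ℝ → ℝ → ℝ) (hφ : φ 0 0 = 0) (n i : ℕ) :
    Lv pX φ (n + 1, 2 * i + 1) = Fn φ (pp (iid pX (2 ^ n))) (fun w => Av n w.2 i)
      (fun w => (Av n w.1 i + Av n w.2 i, pre n i w.1, pre n i w.2)) := by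
  rw [← Fn_equiv φ (iid pX (2 ^ (n + 1))) _ (spl n) (iid_spl pX n)]
  unfold Lv
  simp only [Av_odd]
  apply Fn_kernel φ hφ
  intro x y
  have h := pre_even n i x y
  rw [pre_succ, Prod.mk.injEq, h, Av_even, Av_even]
  simp only [Prod.mk.injEq]

lemma tree_hyp (pX : ZMod 2 → ℝ) (hX : IsPMF pX) :
    TreeHyp (fun s : ℕ × ℕ => (s.1 + 1, 2 * s.2)) (fun s : ℕ × ℕ => (s.1 + 1, 2 * s.2 + 1))
      (Lv pX phiZ) (Lv pX phiT) := by
  have hz : phiZ 0 0 = 0 := by simp [phiZ]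
  have ht : phiT 0 0 = 0 := by simp [phiT]
  constructor
  · intro s
    exact Finset.sum_nonneg fun y _ => by unfold phiZ; positivity
  · intro s
    exact Finset.sum_nonneg fun y _ => abs_nonneg _
  · intro s
    exact ZT_le _ (iid_pmf pX hX _) _ _
  · rintro ⟨n, i⟩
    rw [Lv_odd pX phiZ hz]
    exact (Z_plus _ (iid_pmf pX hX _).1 (fun x => Av n x i) (pre n i)).le
  · rintro ⟨n, i⟩
    rw [Lv_even pX phiZ hz]
    exact (Z_minus _ (iid_pmf pX hX _) (fun x => Av n x i) (pre n i))
  · rintro ⟨n, i⟩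
    rw [Lv_even pX phiT ht]
    exact (T_minus _ (fun x => Av n x i) (pre n i)).le
  · rintro ⟨n, i⟩
    rw [Lv_odd pX phiT ht]
    exact (T_plus _ (iid_pmf pX hX _) (fun x => Av n x i) (pre n i))

lemma sum_range_two_mul (m : ℕ) (f : ℕ → ℝ) :
    ∑ j ∈ Finset.range (2 * m), f j = ∑ j ∈ Finset.range m, (f (2 * j) + f (2 * j + 1)) := by
  induction m with
  | zero => simp
  | succ m ih =>
    rw [show 2 * (m + 1) = 2 * m + 1 + 1 by ring, Finset.sum_range_succ, Finset.sum_range_succ, ih,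
      Finset.sum_range_succ]
    ring

lemma Ex_levels (n : ℕ) (f : ℕ × ℕ → ℝ) :
    Ex (fun s : ℕ × ℕ => (s.1 + 1, 2 * s.2)) (fun s : ℕ × ℕ => (s.1 + 1, 2 * s.2 + 1)) n f (0, 0)
      = (∑ j ∈ Finset.range (2 ^ n), f (n, j)) / 2 ^ n := by
  induction n generalizing f with
  | zero => simp [Ex]
  | succ n ih =>
    rw [Ex_comp, ih, pow_succ 2 n, mul_comm (2 ^ n) 2, sum_range_two_mul]
    simp only [Ex]
    rw [← Finset.sum_div, pow_succ]
    field_simp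

lemma condH_eq (pX : ZMod 2 → ℝ) (n : ℕ) (i : Fin (2 ^ n)) :
    polarCondH pX n i = Lv pX phiH (n, i) := by
  unfold Lv
  rw [Fn_H_eq]
  unfold polarCondH polarA
  rw [push_push, push_push]
  congr 1
  · rw [← Hsh_kernel _ _ _ (pre_succ n i)]
    congr 2
    funext x j
    simp only [pre]
    rw [← Av_fin]; rfl
  · congr 2
    funext x j
    simp only [pre]
    rw [← Av_fin]; rfl

/-- polarization: the fraction of non-polarized indices vanishes -/
lemma polarize (pX : ZMod 2 → ℝ) (hX : IsPMF pX) (β : ℝ) (hβ0 : 0 < β) (hβ : β < 1 / 2) :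
    Tendsto (fun (n : ℕ) =>
        (((polarH pX β n) \ (polarV pX β n)).card : ℝ) / (2 ^ n : ℕ)) atTop (nhds 0) := by
  obtain ⟨b, hb1, hb2⟩ := exists_between hβ
  have hb0 : 0 < b := hβ0.trans hb1
  have main := tree_main _ _ _ _ (tree_hyp pX hX) b hb0 hb2 (0, 0)
  have hev : ∀ᶠ n : ℕ in atTop, (2:ℝ) ^ (β * n) + 3 ≤ (2:ℝ) ^ (b * n) := by
    have h1 : Tendsto (fun n : ℕ => ((2:ℝ) ^ (b - β)) ^ n) atTop atTop :=
      tendsto_pow_atTop_atTop_of_one_lt (Real.one_lt_rpow (by norm_num) (by linarith))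
    filter_upwards [h1.eventually_ge_atTop 4] with n hn
    have e : (2:ℝ) ^ (b * n) = (2:ℝ) ^ (β * n) * ((2:ℝ) ^ (b - β)) ^ n := by
      rw [← Real.rpow_natCast, ← Real.rpow_mul (by norm_num), ← Real.rpow_add (by norm_num)]
      congr 1; ring
    have h2 : (1:ℝ) ≤ (2:ℝ) ^ (β * n) := Real.one_le_rpow (by norm_num) (by positivity)
    rw [e]
    nlinarith
  refine squeeze_zero' (Eventually.of_forall fun n => by positivity) ?_ main
  filter_upwards [hev] with n hn
  rw [Ex_levels]
  have hδ : 8 * (2:ℝ) ^ (-((2:ℝ) ^ (b * n))) ≤ polarδ n β := by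
    unfold polarδ
    rw [← Real.rpow_natCast 2 n, ← Real.rpow_mul (by norm_num), mul_comm (n:ℝ) β,
      show (8:ℝ) = (2:ℝ) ^ (3:ℝ) by norm_num, ← Real.rpow_add (by norm_num)]
    apply Real.rpow_le_rpow_of_exponent_le (by norm_num)
    linarith
  push_cast
  apply div_le_div_of_nonneg_right _ (by positivity)
  rw [← Fin.sum_univ_eq_sum_range (fun j => ind (fun s : ℕ × ℕ => ¬ (Lv pX phiZ s ≤ (2:ℝ) ^ (-((2:ℝ) ^ (b * n))) ∨
      Lv pX phiT s ≤ (2:ℝ) ^ (-((2:ℝ) ^ (b * n))))) (n, j)) (2 ^ n)]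
  rw [Finset.card_eq_sum_ones]
  push_cast
  calc _ ≤ ∑ i ∈ (polarH pX β n) \ (polarV pX β n), ind (fun s : ℕ × ℕ => ¬ (Lv pX phiZ s ≤ (2:ℝ) ^ (-((2:ℝ) ^ (b * n))) ∨
      Lv pX phiT s ≤ (2:ℝ) ^ (-((2:ℝ) ^ (b * n))))) (n, i) := by
        apply Finset.sum_le_sum
        intro i hi
        unfold polarH polarV at hi
        simp only [Finset.mem_sdiff, Finset.mem_filter, Finset.mem_univ, true_and, not_lt] at hi
        rw [condH_eq] at hi
        have hp := iid_pmf pX hX (2 ^ n)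
        have hpos : (0:ℝ) < (2:ℝ) ^ (-((2:ℝ) ^ (b * n))) := by positivity
        unfold ind
        rw [if_pos]
        rintro (h | h)
        · have : Lv pX phiH (n, i) ≤ 4 * Lv pX phiZ (n, i) := by
            unfold Lv Fn
            rw [Finset.mul_sum]
            exact Finset.sum_le_sum fun y _ => phiH_le_Z _ _ (Jt_nonneg _ hp.1 _ _ _ _)
              (Jt_nonneg _ hp.1 _ _ _ _)
          linarith [hi.1]
        · have : 1 - Lv pX phiH (n, i) ≤ 2 * Lv pX phiT (n, i) := by
            rw [← hp.2, ← Jt_sum (iid pX (2 ^ n)) (fun x => Av n x i) (pre n i)]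
            unfold Lv Fn
            rw [Finset.mul_sum, ← Finset.sum_sub_distrib]
            exact Finset.sum_le_sum fun y _ => phiH_ge_T _ _ (Jt_nonneg _ hp.1 _ _ _ _)
              (Jt_nonneg _ hp.1 _ _ _ _)
          linarith [hi.2]
    _ ≤ _ := by
        apply Finset.sum_le_sum_of_subset_of_nonneg (Finset.subset_univ _)
        intro i _ _
        exact ind_nonneg _ _

/-! ### Chain rule and coding lemmas -/

lemma Av_inj (n : ℕ) (x y : Fin (2 ^ n) → ZMod 2) (h : pre n (2 ^ n) x = pre n (2 ^ n) y) :
    x = y := by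
  induction n with
  | zero =>
    rw [pre_eq_iff] at h
    funext i
    have := h i i.2
    rw [Av_fin, Av_fin] at this
    simpa [polarG] using this
  | succ n ih =>
    have e : pre (n + 1) (2 * 2 ^ n) x = pre (n + 1) (2 * 2 ^ n) y := by
      rw [pre_eq_iff] at h ⊢
      intro j hj
      exact h j (by rw [pow_succ]; omega)
    rw [pre_even, Prod.mk.injEq] at e
    apply (spl n).injective
    exact Prod.ext (ih _ _ e.1) (ih _ _ e.2)

lemma Hsh_const {Ω β : Type} [Fintype Ω] [Fintype β] (p : Ω → ℝ) (hp : IsPMF p) (f : Ω → β)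
    (h : ∀ x y, f x = f y) : Hsh (push p f) = 0 := by
  rw [Hsh_kernel p f (fun _ => ()) (fun x y => by simp [h x y])]
  simp [Hsh, push, hp.2]

lemma Hsh_id {Ω β : Type} [Fintype Ω] [Fintype β] (p : Ω → ℝ) (f : Ω → β)
    (h : ∀ x y, f x = f y → x = y) : Hsh (push p f) = Hsh p := by
  rw [Hsh_kernel p f (fun x => x) (fun x y => ⟨h x y, fun h => by rw [h]⟩)]
  congr 1
  funext b
  simp [push]

lemma chain_all (pX : ZMod 2 → ℝ) (hX : IsPMF pX) (n l : ℕ) :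
    Hsh (push (iid pX (2 ^ n)) (pre n l)) = ∑ i ∈ Finset.range l, Lv pX phiH (n, i) := by
  induction l with
  | zero =>
    rw [Hsh_const _ (iid_pmf pX hX _) _ (fun x y => Subsingleton.elim _ _)]
    simp
  | succ l ih =>
    rw [Finset.sum_range_succ, ← ih, Hsh_kernel _ _ _ (pre_succ n l)]
    unfold Lv
    rw [Fn_H_eq]
    ring

lemma chain_total (pX : ZMod 2 → ℝ) (hX : IsPMF pX) (n : ℕ) :
    ∑ i, polarCondH pX n i = 2 ^ n * Hsh pX := by
  simp_rw [condH_eq]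
  rw [Fin.sum_univ_eq_sum_range (fun i => Lv pX phiH (n, i)) (2 ^ n), ← chain_all pX hX,
    Hsh_id _ _ (Av_inj n), Hsh_iid pX hX]
  push_cast
  rfl

lemma condH_nonneg (pX : ZMod 2 → ℝ) (hX : IsPMF pX) (n : ℕ) (i : Fin (2 ^ n)) :
    0 ≤ polarCondH pX n i := by
  rw [condH_eq]
  have hp := iid_pmf pX hX (2 ^ n)
  exact Finset.sum_nonneg fun y _ => phiH_nonneg _ _ (Jt_nonneg _ hp.1 _ _ _ _)
              (Jt_nonneg _ hp.1 _ _ _ _)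

lemma condH_le_one (pX : ZMod 2 → ℝ) (hX : IsPMF pX) (n : ℕ) (i : Fin (2 ^ n)) :
    polarCondH pX n i ≤ 1 := by
  rw [condH_eq]
  have hp := iid_pmf pX hX (2 ^ n)
  rw [← hp.2, ← Jt_sum (iid pX (2 ^ n)) (fun x => Av n x i) (pre n i)]
  exact Finset.sum_le_sum fun y _ => phiH_le_add _ _ (Jt_nonneg _ hp.1 _ _ _ _)
              (Jt_nonneg _ hp.1 _ _ _ _)

/-- masked output -/
def msk (n : ℕ) (S : Finset ℕ) (l : ℕ) (x : Fin (2 ^ n) → ZMod 2) (j : Fin l) : ZMod 2 :=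
  if (j : ℕ) ∈ S then Av n x j else 0

lemma msk_eq_iff (n : ℕ) (S : Finset ℕ) (l : ℕ) (x y : Fin (2 ^ n) → ZMod 2) :
    msk n S l x = msk n S l y ↔ ∀ j < l, j ∈ S → Av n x j = Av n y j := by
  constructor
  · intro h j hj hS
    have := congrFun h ⟨j, hj⟩
    simpa [msk, hS] using this
  · intro h
    funext j
    unfold msk
    split_ifs with hS
    · exact h j j.2 hS
    · rfl

lemma chain_set_aux (pX : ZMod 2 → ℝ) (hX : IsPMF pX) (n : ℕ) (S : Finset ℕ) (l : ℕ) :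
    ∑ i ∈ Finset.range l, (if i ∈ S then Lv pX phiH (n, i) else 0) ≤
      Hsh (push (iid pX (2 ^ n)) (msk n S l)) := by
  induction l with
  | zero =>
    rw [Hsh_const _ (iid_pmf pX hX _) _ (fun x y => Subsingleton.elim _ _)]
    simp
  | succ l ih =>
    rw [Finset.sum_range_succ]
    by_cases hl : l ∈ S
    · rw [if_pos hl, Hsh_kernel _ (msk n S (l + 1)) (fun x => (Av n x l, msk n S l x))]
      · have h1 := Fn_H_eq (iid pX (2 ^ n)) (fun x => Av n x l) (msk n S l)
        have h2 := Fn_H_mono (iid pX (2 ^ n)) (iid_pmf pX hX _).1 (fun x => Av n x l) (pre n l)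
          (fun (y : Fin l → ZMod 2) (j : Fin l) => if (j : ℕ) ∈ S then y j else 0)
        have h3 : Lv pX phiH (n, l) ≤ Fn phiH (iid pX (2 ^ n)) (fun x => Av n x l) (msk n S l) := h2
        linarith
      · intro x y
        rw [Prod.mk.injEq, msk_eq_iff, msk_eq_iff]
        constructor
        · intro h
          exact ⟨h l (by omega) hl, fun j hj => h j (by omega)⟩
        · rintro ⟨h1, h2⟩ j hj hS
          rcases Nat.lt_succ_iff_lt_or_eq.1 hj with h | rfl
          · exact h2 j h hS
          · exact h1
    · rw [if_neg hl, add_zero, Hsh_kernel _ (msk n S (l + 1)) (msk n S l)]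
      · exact ih
      · intro x y
        rw [msk_eq_iff, msk_eq_iff]
        constructor
        · intro h j hj
          exact h j (by omega)
        · intro h j hj hS
          rcases Nat.lt_succ_iff_lt_or_eq.1 hj with h1 | rfl
          · exact h j h1 hS
          · exact absurd hS hl

lemma chain_set (pX : ZMod 2 → ℝ) (hX : IsPMF pX) (n : ℕ) (S : Finset (Fin (2 ^ n)))
    {β : Type} [Fintype β] (g : (Fin (2 ^ n) → ZMod 2) → β)
    (hg : ∀ x y, g x = g y ↔ ∀ i ∈ S, Matrix.vecMul x (polarG n) i = Matrix.vecMul y (polarG n) i) :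
    ∑ i ∈ S, polarCondH pX n i ≤ Hsh (push (iid pX (2 ^ n)) g) := by
  have h := chain_set_aux pX hX n (S.map Fin.valEmbedding) (2 ^ n)
  have hmem : ∀ i : Fin (2 ^ n), (i : ℕ) ∈ S.map Fin.valEmbedding ↔ i ∈ S := by
    intro i
    simp
    constructor
    · rintro ⟨a, ha, hb⟩
      rwa [← Fin.ext hb]
    · intro hi; exact ⟨i, hi, rfl⟩
  rw [Hsh_kernel _ g (msk n (S.map Fin.valEmbedding) (2 ^ n))]
  · refine le_trans (le_of_eq ?_) h
    rw [← Fin.sum_univ_eq_sum_range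
      (fun i => if i ∈ S.map Fin.valEmbedding then Lv pX phiH (n, i) else 0) (2 ^ n)]
    simp_rw [hmem, condH_eq]
    rw [Finset.sum_ite_mem, Finset.univ_inter]
  · intro x y
    rw [hg, msk_eq_iff]
    constructor
    · intro h j hj hS
      have := h ⟨j, hj⟩ ((hmem ⟨j, hj⟩).1 hS)
      rw [← Av_fin, ← Av_fin] at this
      exact this
    · intro h i hi
      rw [← Av_fin, ← Av_fin]
      exact h i i.2 ((hmem i).2 hi)

lemma Hsh_le_log {β : Type} [Fintype β] (q : β → ℝ) (hq : IsPMF q) (k : ℕ)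
    (hk : (Fintype.card β : ℝ) = 2 ^ k) : Hsh q ≤ k := by
  have hl : 0 < Real.log 2 := Real.log_pos (by norm_num)
  have key : ∀ b, q b * (-(k * Real.log 2) - Real.log (q b)) ≤ 1 / 2 ^ k - q b := by
    intro b
    rcases (hq.1 b).eq_or_lt with h | h
    · rw [← h]; simp
    · have := xlog_le (q b) (1 / 2 ^ k) h (by positivity)
      rwa [one_div, Real.log_inv, Real.log_pow, ← one_div] at this
  have hs := Finset.sum_le_sum (s := Finset.univ) fun b _ => key b
  rw [Finset.sum_sub_distrib, hq.2, Finset.sum_const, Finset.card_univ, nsmul_eq_mul, hk] at hs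
  rw [mul_one_div_cancel (by positivity)] at hs
  simp_rw [mul_sub] at hs
  rw [Finset.sum_sub_distrib, ← Finset.sum_mul, hq.2] at hs
  unfold Hsh Real.logb
  simp_rw [← mul_div_assoc]
  rw [← Finset.sum_div, ← neg_div, div_le_iff₀ hl]
  linarith

lemma push_pmf {Ω β : Type} [Fintype Ω] [Fintype β] (p : Ω → ℝ) (hp : IsPMF p) (f : Ω → β) :
    IsPMF (push p f) := ⟨push_nonneg p hp.1 f, by rw [push_sum, hp.2]⟩

lemma card_fun_zmod {ι : Type} [Fintype ι] [Fintype (ι → ZMod 2)] :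
    (Fintype.card (ι → ZMod 2) : ℝ) = 2 ^ Fintype.card ι := by
  have h : Nat.card (ι → ZMod 2) = 2 ^ Nat.card ι := by rw [Nat.card_fun, Nat.card_zmod]
  rw [Nat.card_eq_fintype_card, Nat.card_eq_fintype_card] at h
  exact_mod_cast h

lemma KL_otp {Ω β ι : Type} [Fintype Ω] [Fintype β] [Fintype ι] [Fintype (ι → ZMod 2)]
    (p : Ω → ℝ) (hp : IsPMF p)
    (g : Ω → β) (a : Ω → ι → ZMod 2) (k d : ℕ) (hd : Fintype.card ι = d) :
    KL (push (fun xu : Ω × (ι → ZMod 2) => p xu.1 * (1 / (2:ℝ) ^ d))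
        (fun xu => (g xu.1, fun i => a xu.1 i + xu.2 i))) (fun _ => 1 / (2:ℝ) ^ (k + d))
      = k - Hsh (push p g) := by
  have hpush : ∀ v w, push (fun xu : Ω × (ι → ZMod 2) => p xu.1 * (1 / (2:ℝ) ^ d))
        (fun xu => (g xu.1, fun i => a xu.1 i + xu.2 i)) (v, w) = push p g v * (1 / (2:ℝ) ^ d) := by
    intro v w
    unfold push
    rw [Fintype.sum_prod_type, Finset.sum_mul]
    apply Finset.sum_congr rfl
    intro x _
    rw [Finset.sum_eq_single (w - a x)]
    · by_cases h : g x = v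
      · rw [if_pos, if_pos h]
        show (g x, fun i => a x i + (w - a x) i) = (v, w)
        rw [h]
        congr 1
        funext i
        simp
      · rw [if_neg, if_neg h, zero_mul]
        intro h2
        exact h (Prod.ext_iff.1 h2).1
    · intro u _ hu
      rw [if_neg]
      intro h2
      apply hu
      have h3 : (fun i => a x i + u i) = w := (Prod.ext_iff.1 h2).2
      rw [← h3]
      funext i
      simp
    · simp
  unfold KL
  rw [Fintype.sum_prod_type]
  simp_rw [hpush]
  have hcard := card_fun_zmod (ι := ι)
  rw [hd] at hcard
  have hpt : ∀ v, ∑ _w : ι → ZMod 2, push p g v * (1 / (2:ℝ) ^ d) *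
      Real.logb 2 (push p g v * (1 / (2:ℝ) ^ d) / (1 / (2:ℝ) ^ (k + d)))
      = push p g v * k + push p g v * Real.logb 2 (push p g v) := by
    intro v
    rw [Finset.sum_const, Finset.card_univ, nsmul_eq_mul, hcard]
    by_cases h0 : push p g v = 0
    · simp [h0]
    · have e : push p g v * (1 / (2:ℝ) ^ d) / (1 / (2:ℝ) ^ (k + d)) = 2 ^ k * push p g v := by
        rw [pow_add]; field_simp
      rw [e, Real.logb_mul (by positivity) h0, Real.logb_pow, Real.logb_self_eq_one (by norm_num)]
      field_simp
  simp_rw [hpt]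
  rw [Finset.sum_add_distrib, ← Finset.sum_mul, (push_pmf p hp g).2]
  unfold Hsh
  ring

lemma decoder_exists {Ω β : Type} [Fintype Ω] [Nonempty Ω] [Fintype β] (p : Ω → ℝ) (hp : IsPMF p)
    (g : Ω → β) : ∃ ψ : β → Ω, ∑ x, p x * (if ψ (g x) = x then 0 else 1) ≤
      Hsh p - Hsh (push p g) := by
  have hex : ∀ b : β, ∃ y : Ω, b ∈ Set.range g → (g y = b ∧ ∀ x, g x = b → p x ≤ p y) := by
    intro b
    by_cases hb : b ∈ Set.range g
    · obtain ⟨x0, hx0⟩ := hb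
      obtain ⟨y, hy, hmax⟩ := Finset.exists_max_image (Finset.univ.filter fun x => g x = b) p
        ⟨x0, by simp [hx0]⟩
      refine ⟨y, fun _ => ⟨by simpa using hy, fun x hx => hmax x (by simp [hx])⟩⟩
    · exact ⟨Classical.arbitrary Ω, fun h => absurd h hb⟩
  choose ψ hψ using hex
  refine ⟨ψ, ?_⟩
  set Q := push p g with hQ
  have hQp : ∀ y, p y ≤ Q (g y) := by
    intro y
    rw [hQ]
    unfold push
    have := Finset.single_le_sum (f := fun a => if g a = g y then p a else 0)
      (fun a _ => by
        show 0 ≤ if g a = g y then p a else 0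
        split_ifs
        · exact hp.1 a
        · exact le_rfl) (Finset.mem_univ y)
    simpa using this
  have hH : Hsh p - Hsh Q = ∑ x, p x * (Real.logb 2 (Q (g x)) - Real.logb 2 (p x)) := by
    unfold Hsh
    rw [hQ, push_sum_mul p g (fun b => Real.logb 2 (push p g b))]
    simp_rw [mul_sub]
    rw [Finset.sum_sub_distrib]
    ring
  have hpt : ∀ x, p x * (1 - p (ψ (g x)) / Q (g x)) ≤
      p x * (Real.logb 2 (Q (g x)) - Real.logb 2 (p x)) := by
    intro x
    rcases (hp.1 x).eq_or_lt with h | h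
    · rw [← h]; simp
    · apply mul_le_mul_of_nonneg_left _ h.le
      obtain ⟨h1, h2⟩ := hψ (g x) ⟨x, rfl⟩
      have hm : 0 < p (ψ (g x)) := lt_of_lt_of_le h (h2 x rfl)
      have hq : p (ψ (g x)) ≤ Q (g x) := by
        have := hQp (ψ (g x)); rwa [h1] at this
      have hq0 : 0 < Q (g x) := hm.trans_le hq
      have hl : 0 < Real.log 2 := Real.log_pos (by norm_num)
      have hl1 : Real.log 2 ≤ 1 := by linarith [Real.log_two_lt_d9]
      have hr : p (ψ (g x)) / Q (g x) ≤ 1 := (div_le_one hq0).2 hq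
      have h3 := Real.log_le_sub_one_of_pos (div_pos hm hq0)
      rw [Real.log_div hm.ne' hq0.ne'] at h3
      have h4 := Real.log_le_log h (h2 x rfl)
      unfold Real.logb
      rw [← sub_div, le_div_iff₀ hl]
      nlinarith
  have hsum : ∑ x, p x * (p (ψ (g x)) / Q (g x)) ≤ ∑ x, if ψ (g x) = x then p x else 0 := by
    have e1 := push_sum_mul p g (fun b => p (ψ b) / Q b)
    rw [← e1]
    have e2 : ∑ x, (if ψ (g x) = x then p x else 0) = ∑ b, if g (ψ b) = b then p (ψ b) else 0 := by
      have c1 : ∀ x, (if ψ (g x) = x then p x else 0) =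
          ∑ b, if (g x = b ∧ ψ b = x) then p x else 0 := by
        intro x
        rw [Finset.sum_eq_single (g x)]
        · simp
        · intro b _ hb
          rw [if_neg]
          exact fun h => hb h.1.symm
        · simp
      have c2 : ∀ b, (if g (ψ b) = b then p (ψ b) else 0) =
          ∑ x, if (g x = b ∧ ψ b = x) then p x else 0 := by
        intro b
        rw [Finset.sum_eq_single (ψ b)]
        · simp
        · intro x _ hx
          rw [if_neg]
          exact fun h => hx h.2.symm
        · simp
      simp_rw [c1, c2]
      exact Finset.sum_comm
    rw [e2]
    apply Finset.sum_le_sum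
    intro b _
    by_cases hb : b ∈ Set.range g
    · rw [if_pos (hψ b hb).1]
      rw [← hQ]
      by_cases h0 : Q b = 0
      · rw [h0, zero_mul]; exact hp.1 _
      · rw [mul_div_cancel₀ _ h0]
    · rw [push_zero p g b hb, zero_mul]
      split_ifs
      · exact hp.1 _
      · exact le_rfl
  have hL : ∑ x, p x * (if ψ (g x) = x then (0:ℝ) else 1) =
      1 - ∑ x, if ψ (g x) = x then p x else 0 := by
    rw [eq_sub_iff_add_eq, ← Finset.sum_add_distrib]
    refine Eq.trans (Finset.sum_congr rfl ?_) hp.2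
    intro x _
    split_ifs <;> simp
  have hM := Finset.sum_le_sum (s := Finset.univ) fun x _ => hpt x
  simp_rw [mul_sub, mul_one] at hM
  rw [Finset.sum_sub_distrib, hp.2] at hM
  rw [hL, hH]
  simp_rw [mul_sub]
  linarith

lemma Ndelta_tendsto (β : ℝ) (hβ0 : 0 < β) :
    Tendsto (fun n : ℕ => (2:ℝ) ^ n * polarδ n β) atTop (nhds 0) := by
  have h1 : Tendsto (fun n : ℕ => ((2:ℝ) ^ n) ^ β) atTop atTop :=
    (tendsto_rpow_atTop hβ0).comp (tendsto_pow_atTop_atTop_of_one_lt (by norm_num))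
  have h2 := (tendsto_rpow_mul_exp_neg_mul_atTop_nhds_zero (1 / β) (Real.log 2)
    (Real.log_pos (by norm_num))).comp h1
  refine h2.congr fun n => ?_
  simp only [Function.comp]
  unfold polarδ
  rw [← Real.rpow_mul (by positivity), mul_one_div_cancel hβ0.ne', Real.rpow_one,
    Real.rpow_def_of_pos (by norm_num : (0:ℝ) < 2)]
  congr 2
  ring

lemma delta_pos (β : ℝ) (n : ℕ) : 0 < polarδ n β := by unfold polarδ; positivity

lemma delta_tendsto (β : ℝ) (hβ0 : 0 < β) :
    Tendsto (fun n : ℕ => polarδ n β) atTop (nhds 0) := by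
  refine squeeze_zero (fun n => (delta_pos β n).le) (fun n => ?_) (Ndelta_tendsto β hβ0)
  have := delta_pos β n
  have h1 : (1:ℝ) ≤ 2 ^ n := one_le_pow₀ (by norm_num)
  nlinarith

lemma rate_tendsto (pX : ZMod 2 → ℝ) (hX : IsPMF pX) (β : ℝ) (hβ0 : 0 < β) (hβ : β < 1 / 2) :
    Tendsto (fun (n : ℕ) =>
        (((polarV pX β n).card + ((polarH pX β n) \ (polarV pX β n)).card : ℕ) : ℝ)
          / (2 ^ n : ℕ)) atTop (nhds (Hsh pX)) := by
  have hD := polarize pX hX β hβ0 hβ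
  have hδ := delta_tendsto β hβ0
  have hlo : Tendsto (fun n : ℕ => Hsh pX - polarδ n β) atTop (nhds (Hsh pX)) := by
    simpa using hδ.const_sub (Hsh pX)
  have hhi : Tendsto (fun n : ℕ => Hsh pX + polarδ n β +
      (((polarH pX β n) \ (polarV pX β n)).card : ℝ) / (2 ^ n : ℕ)) atTop (nhds (Hsh pX)) := by
    simpa using (hδ.const_add (Hsh pX)).add hD
  refine tendsto_of_tendsto_of_tendsto_of_le_of_le hlo hhi (fun n => ?_) (fun n => ?_)
  · have hN : (0:ℝ) < ((2 ^ n : ℕ) : ℝ) := by positivity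
    show Hsh pX - polarδ n β ≤ _
    rw [le_div_iff₀ hN]
    have h1 := chain_total pX hX n
    have h2 : ∑ i, polarCondH pX n i ≤
        ∑ i : Fin (2 ^ n), ((if i ∈ polarV pX β n ∪ (polarH pX β n \ polarV pX β n) then (1:ℝ) else 0)
          + polarδ n β) := by
      apply Finset.sum_le_sum
      intro i _
      split_ifs with h
      · have := condH_le_one pX hX n i
        have := delta_pos β n
        linarith
      · rw [Finset.union_sdiff_self_eq_union, Finset.mem_union, not_or] at h
        have := h.2
        unfold polarH at this
        simp only [Finset.mem_filter, Finset.mem_univ, true_and, not_lt] at this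
        linarith
    rw [Finset.sum_add_distrib, Finset.sum_ite_mem, Finset.univ_inter, Finset.sum_const,
      Finset.sum_const, Finset.card_union_of_disjoint Finset.disjoint_sdiff, h1] at h2
    simp only [nsmul_eq_mul, Finset.card_univ, Fintype.card_fin, mul_one] at h2
    push_cast at h2 ⊢
    linarith
  · have hN : (0:ℝ) < ((2 ^ n : ℕ) : ℝ) := by positivity
    push_cast at hN ⊢
    rw [add_div]
    apply add_le_add_left
    rw [div_le_iff₀ hN]
    have h1 := chain_total pX hX n
    have h2 : ∑ i : Fin (2 ^ n), ((if i ∈ polarV pX β n then (1:ℝ) else 0) - polarδ n β) ≤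
        ∑ i, polarCondH pX n i := by
      apply Finset.sum_le_sum
      intro i _
      split_ifs with h
      · unfold polarV at h
        simp only [Finset.mem_filter, Finset.mem_univ, true_and] at h
        linarith
      · have := condH_nonneg pX hX n i
        have := delta_pos β n
        linarith
    rw [Finset.sum_sub_distrib, Finset.sum_ite_mem, Finset.univ_inter, Finset.sum_const,
      Finset.sum_const, h1] at h2
    simp only [nsmul_eq_mul, Finset.card_univ, Fintype.card_fin, mul_one] at h2
    push_cast at h2
    linarith
/-- Proposition 4: polar-code-based uniform compression codes achieve
any rate `R > H(X)` with vanishing seed rate. -/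
theorem statement9 (pX : ZMod 2 → ℝ) (hX : IsPMF pX)
    (β : ℝ) (hβ0 : 0 < β) (hβ : β < 1 / 2)
    (R : ℝ) (hR : Hsh pX < R) :
    -- seed rate `|H_X \ V_X| / N → 0`
    Tendsto (fun (n : ℕ) =>
        (((polarH pX β n) \ (polarV pX β n)).card : ℝ) / (2 ^ n : ℕ)) atTop (nhds 0) ∧
    -- output length `(1/N)(|V_X| + |H_X \ V_X|) → H(X)`
    Tendsto (fun (n : ℕ) =>
        (((polarV pX β n).card + ((polarH pX β n) \ (polarV pX β n)).card : ℕ) : ℝ)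
          / (2 ^ n : ℕ)) atTop (nhds (Hsh pX)) ∧
    -- and `≤ R` eventually
    (∀ᶠ (n : ℕ) in atTop,
      (((polarV pX β n).card + ((polarH pX β n) \ (polarV pX β n)).card : ℕ) : ℝ)
        / (2 ^ n : ℕ) ≤ R) ∧
    -- KL divergence between the encoder output and the uniform distribution tends to 0
    Tendsto (fun (n : ℕ) =>
        KL (push
              (fun xu : (Fin (2 ^ n) → ZMod 2) ×
                        (((polarH pX β n) \ (polarV pX β n) : Finset (Fin (2 ^ n))) → ZMod 2) =>
                iid pX (2 ^ n) xu.1 *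
                  (1 / (2:ℝ) ^ ((polarH pX β n) \ (polarV pX β n)).card))
              (fun xu =>
                ((fun i : (polarV pX β n) => Matrix.vecMul xu.1 (polarG n) i.1),
                 (fun i : ((polarH pX β n) \ (polarV pX β n) : Finset (Fin (2 ^ n))) =>
                    Matrix.vecMul xu.1 (polarG n) i.1 + xu.2 i))))
           (fun _ => 1 / (2:ℝ) ^
              ((polarV pX β n).card + ((polarH pX β n) \ (polarV pX β n)).card)))
      atTop (nhds 0) ∧
    -- existence of decoders (using the encoder output and the shared seed) with
    -- vanishing error probability
    ∃ ψ : (n : ℕ) →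
        (((polarV pX β n) → ZMod 2) ×
           ((((polarH pX β n) \ (polarV pX β n) : Finset (Fin (2 ^ n)))) → ZMod 2)) ×
          ((((polarH pX β n) \ (polarV pX β n) : Finset (Fin (2 ^ n)))) → ZMod 2) →
        (Fin (2 ^ n) → ZMod 2),
      Tendsto (fun (n : ℕ) =>
          ∑ x : Fin (2 ^ n) → ZMod 2,
            ∑ u : (((polarH pX β n) \ (polarV pX β n) : Finset (Fin (2 ^ n)))) → ZMod 2,
              iid pX (2 ^ n) x * (1 / (2:ℝ) ^ ((polarH pX β n) \ (polarV pX β n)).card) *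
                (if ψ n
                      (((fun i : (polarV pX β n) => Matrix.vecMul x (polarG n) i.1),
                        (fun i : ((polarH pX β n) \ (polarV pX β n) : Finset (Fin (2 ^ n))) =>
                          Matrix.vecMul x (polarG n) i.1 + u i)), u) = x
                 then 0 else 1))
        atTop (nhds 0) := by
  have hrate := rate_tendsto pX hX β hβ0 hβ
  refine ⟨polarize pX hX β hβ0 hβ, hrate, hrate.eventually_le_const hR, ?_, ?_⟩
  · refine squeeze_zero (fun n => ?_) (fun n => ?_) (Ndelta_tendsto β hβ0)
    · rw [KL_otp (iid pX (2 ^ n)) (iid_pmf pX hX _)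
        (fun x => fun i : (polarV pX β n) => Matrix.vecMul x (polarG n) i.1)
        (fun x => fun i : ((polarH pX β n) \ (polarV pX β n) : Finset (Fin (2 ^ n))) =>
          Matrix.vecMul x (polarG n) i.1) _ _ (Fintype.card_coe _)]
      have := Hsh_le_log _ (push_pmf _ (iid_pmf pX hX (2 ^ n))
        (fun x => fun i : (polarV pX β n) => Matrix.vecMul x (polarG n) i.1))
        (polarV pX β n).card (by rw [card_fun_zmod, Fintype.card_coe])
      linarith
    · rw [KL_otp (iid pX (2 ^ n)) (iid_pmf pX hX _)
        (fun x => fun i : (polarV pX β n) => Matrix.vecMul x (polarG n) i.1)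
        (fun x => fun i : ((polarH pX β n) \ (polarV pX β n) : Finset (Fin (2 ^ n))) =>
          Matrix.vecMul x (polarG n) i.1) _ _ (Fintype.card_coe _)]
      have h1 := chain_set pX hX n (polarV pX β n)
        (fun x => fun i : (polarV pX β n) => Matrix.vecMul x (polarG n) i.1) (by
          intro x y
          rw [funext_iff]
          exact ⟨fun h i hi => h ⟨i, hi⟩, fun h i => h i.1 i.2⟩)
      have h2 : ∑ i ∈ polarV pX β n, (1 - polarδ n β) ≤ ∑ i ∈ polarV pX β n, polarCondH pX n i := by
        apply Finset.sum_le_sum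
        intro i hi
        unfold polarV at hi
        simp only [Finset.mem_filter, Finset.mem_univ, true_and] at hi
        exact hi.le
      rw [Finset.sum_const, nsmul_eq_mul] at h2
      have h3 : ((polarV pX β n).card : ℝ) ≤ 2 ^ n := by
        have := Finset.card_le_univ (polarV pX β n)
        rw [Fintype.card_fin] at this
        exact_mod_cast this
      have := delta_pos β n
      nlinarith
  · have hdec := fun n : ℕ => decoder_exists (iid pX (2 ^ n)) (iid_pmf pX hX _)
      (fun x => ((fun i : (polarV pX β n) => Matrix.vecMul x (polarG n) i.1),
        (fun i : ((polarH pX β n) \ (polarV pX β n) : Finset (Fin (2 ^ n))) =>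
          Matrix.vecMul x (polarG n) i.1)))
    choose ψ0 hψ0 using hdec
    refine ⟨fun n z => ψ0 n (z.1.1, fun i => z.1.2 i - z.2 i), ?_⟩
    refine squeeze_zero (fun n => ?_) (fun n => ?_) (Ndelta_tendsto β hβ0)
    · refine Finset.sum_nonneg fun x _ => Finset.sum_nonneg fun u _ => ?_
      have := (iid_pmf pX hX (2 ^ n)).1 x
      split_ifs <;> positivity
    · simp only [add_sub_cancel_right]
      have h0 := hψ0 n
      have h1 := chain_set pX hX n
        (polarV pX β n ∪ (polarH pX β n \ polarV pX β n))
        (fun x => ((fun i : (polarV pX β n) => Matrix.vecMul x (polarG n) i.1),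
          (fun i : ((polarH pX β n) \ (polarV pX β n) : Finset (Fin (2 ^ n))) =>
            Matrix.vecMul x (polarG n) i.1))) (by
          intro x y
          rw [Prod.mk.injEq, funext_iff, funext_iff]
          constructor
          · rintro ⟨ha, hb⟩ i hi
            rcases Finset.mem_union.1 hi with h | h
            · exact ha ⟨i, h⟩
            · exact hb ⟨i, h⟩
          · intro h
            exact ⟨fun i => h i.1 (Finset.mem_union_left _ i.2),
              fun i => h i.1 (Finset.mem_union_right _ i.2)⟩)
      have h2 := chain_total pX hX n
      have h3 : ∑ i, polarCondH pX n i ≤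
          ∑ i ∈ polarV pX β n ∪ (polarH pX β n \ polarV pX β n), polarCondH pX n i
            + 2 ^ n * polarδ n β := by
        have : ∑ i, polarCondH pX n i ≤
          ∑ i, ((if i ∈ polarV pX β n ∪ (polarH pX β n \ polarV pX β n)
            then polarCondH pX n i else 0) + polarδ n β) := by
          apply Finset.sum_le_sum
          intro i _
          split_ifs with h
          · have := delta_pos β n
            linarith
          · rw [Finset.union_sdiff_self_eq_union, Finset.mem_union, not_or] at h
            have := h.2
            unfold polarH at this
            simp only [Finset.mem_filter, Finset.mem_univ, true_and, not_lt] at this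
            linarith
        rw [Finset.sum_add_distrib, Finset.sum_ite_mem, Finset.univ_inter, Finset.sum_const] at this
        simpa using this
      have h4 := Hsh_iid pX hX (2 ^ n)
      push_cast at h4
      refine le_trans (le_of_eq ?_) (h0.trans (by linarith))
      apply Finset.sum_congr rfl
      intro x _
      rw [Finset.sum_const, Finset.card_univ, nsmul_eq_mul, card_fun_zmod, Fintype.card_coe]
      rw [mul_comm (iid pX (2 ^ n) x), mul_assoc, ← mul_assoc, mul_one_div_cancel (by positivity),
        one_mul]
      congr
end
end

section
/- Let (X, p_X) be a binary memoryless source, β ∈ (0, 1/2), N = 2^n, δ_N = 2^{−N^β}, G_N the n-fold Kronecker power of [[1,0],[1,1]] over F₂, A^N = X^N G_N, and V_X = {i : H(A_i | A^{i−1}) > 1 − δ_N}. Then the subvector A^N[V_X] is nearly uniform: log 2^{|V_X|} − H(A^N[V_X]) ≤ N δ_N, i.e., the Kullback–Leibler divergence between the distribution of A^N[V_X] and the uniform distribution on {0,1}^{|V_X|} is at most N δ_N. -/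
open Finset Filter Real

attribute [local instance] Classical.propDecidable

noncomputable section

theorem aux_push_nonneg {α β : Type*} [Fintype α] [Fintype β] {p : α → ℝ} (hp : ∀ a, 0 ≤ p a)
    (f : α → β) (b : β) : 0 ≤ push p f b := by
  unfold push
  exact Finset.sum_nonneg fun a _ => by split_ifs <;> simp [hp]

theorem aux_le_push {α β : Type*} [Fintype α] [Fintype β] {p : α → ℝ} (hp : ∀ a, 0 ≤ p a)
    (f : α → β) (a : α) : p a ≤ push p f (f a) := by
  unfold push
  have := Finset.single_le_sum (f := fun x => if f x = f a then p x else 0) (s := Finset.univ)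
    (fun x _ => by split_ifs <;> simp [hp]) (Finset.mem_univ a)
  simpa using this

theorem aux_sum_push {α β : Type*} [Fintype α] [Fintype β] (p : α → ℝ)
    (f : α → β) (φ : β → ℝ) : ∑ b, push p f b * φ b = ∑ a, p a * φ (f a) := by
  unfold push
  simp_rw [Finset.sum_mul]
  rw [Finset.sum_comm]
  refine Finset.sum_congr rfl fun a _ => ?_
  rw [Finset.sum_eq_single (f a)]
  · simp
  · intro b _ hb
    rw [if_neg (Ne.symm hb), zero_mul]
  · simp

theorem aux_push_sum {α β : Type*} [Fintype α] [Fintype β] (p : α → ℝ)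
    (f : α → β) : ∑ b, push p f b = ∑ a, p a := by
  simpa using aux_sum_push p f (fun _ => 1)

theorem aux_push_pmf {α β : Type*} [Fintype α] [Fintype β] {p : α → ℝ} (hp : IsPMF p)
    (f : α → β) : IsPMF (push p f) :=
  ⟨aux_push_nonneg hp.1 f, (aux_push_sum p f).trans hp.2⟩

theorem aux_marg {α β γ : Type*} [Fintype α] [Fintype β] [Fintype γ] (p : α → ℝ)
    (f : α → β) (u : α → γ) (b : β) :
    ∑ d, push p (fun a => (f a, u a)) (b, d) = push p f b := by
  unfold push
  rw [Finset.sum_comm]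
  refine Finset.sum_congr rfl fun a _ => ?_
  by_cases h : f a = b
  · rw [Finset.sum_eq_single (u a)]
    · simp [h]
    · intro d _ hd
      rw [if_neg]
      simp [Ne.symm hd]
    · simp
  · simp [h]

theorem aux_Hsh {α β : Type*} [Fintype α] [Fintype β] (p : α → ℝ) (f : α → β) :
    Hsh (push p f) = - ∑ a, p a * Real.logb 2 (push p f (f a)) := by
  unfold Hsh
  rw [aux_sum_push p f (fun b => Real.logb 2 (push p f b))]

theorem aux_Hsh_congr {α β γ : Type*} [Fintype α] [Fintype β] [Fintype γ] (p : α → ℝ)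
    (f : α → β) (g : α → γ) (h : ∀ a b, f a = f b ↔ g a = g b) :
    Hsh (push p f) = Hsh (push p g) := by
  rw [aux_Hsh, aux_Hsh]
  have : ∀ a, push p f (f a) = push p g (g a) := by
    intro a
    unfold push
    refine Finset.sum_congr rfl fun x _ => ?_
    by_cases hx : f x = f a
    · rw [if_pos hx, if_pos ((h _ _).1 hx)]
    · rw [if_neg hx, if_neg (fun h' => hx ((h _ _).2 h'))]
  simp_rw [this]

theorem aux_submod {α β γ δ : Type*} [Fintype α] [Fintype β] [Fintype γ] [Fintype δ]
    {p : α → ℝ} (hp : IsPMF p) (f : α → β) (t : β → γ) (u : α → δ) :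
    Hsh (push p (fun a => (f a, u a))) - Hsh (push p f)
      ≤ Hsh (push p (fun a => (t (f a), u a))) - Hsh (push p (fun a => t (f a))) := by
  set FU := push p (fun a => (f a, u a)) with hFU
  set F := push p f with hF
  set GU := push p (fun a => (t (f a), u a)) with hGU
  set G := push p (fun a => t (f a)) with hG
  have e1 : Hsh FU = - ∑ a, p a * Real.logb 2 (FU (f a, u a)) := aux_Hsh _ _
  have e2 : Hsh F = - ∑ a, p a * Real.logb 2 (F (f a)) := aux_Hsh _ _
  have e3 : Hsh GU = - ∑ a, p a * Real.logb 2 (GU (t (f a), u a)) := aux_Hsh _ _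
  have e4 : Hsh G = - ∑ a, p a * Real.logb 2 (G (t (f a))) := aux_Hsh _ _
  have nF : ∀ b, 0 ≤ F b := aux_push_nonneg hp.1 _
  have nG : ∀ b, 0 ≤ G b := aux_push_nonneg hp.1 _
  have nFU : ∀ b, 0 ≤ FU b := aux_push_nonneg hp.1 _
  have nGU : ∀ b, 0 ≤ GU b := aux_push_nonneg hp.1 _
  have key : ∑ a, p a * (GU (t (f a), u a) * F (f a) / (FU (f a, u a) * G (t (f a)))) ≤ 1 := by
    have h1 := aux_sum_push p (fun a => (f a, u a))
      (fun x => GU (t x.1, x.2) * F x.1 / (FU x * G (t x.1)))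
    rw [← hFU] at h1
    dsimp only at h1
    rw [← h1, Fintype.sum_prod_type]
    have h2 : ∀ b, ∑ d, FU (b, d) * (GU (t b, d) * F b / (FU (b, d) * G (t b))) ≤ F b := by
      intro b
      calc _ ≤ ∑ d, GU (t b, d) * (F b / G (t b)) := by
            refine Finset.sum_le_sum fun d _ => ?_
            rcases eq_or_ne (FU (b, d)) 0 with h | h
            · rw [h, zero_mul]
              exact mul_nonneg (nGU _) (div_nonneg (nF _) (nG _))
            · apply le_of_eq
              rw [mul_div_assoc', mul_div_mul_left _ _ h, mul_div_assoc]
        _ = G (t b) * (F b / G (t b)) := by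
            rw [← Finset.sum_mul]
            congr 1
            exact aux_marg p (fun a => t (f a)) u (t b)
        _ ≤ F b := by
            rcases eq_or_ne (G (t b)) 0 with h | h
            · rw [h, zero_mul]; exact nF b
            · rw [mul_div_cancel₀ _ h]
    calc _ ≤ ∑ b, F b := Finset.sum_le_sum fun b _ => h2 b
      _ = 1 := (aux_push_sum p f).trans hp.2
  have hl2 : 0 < Real.log 2 := Real.log_pos (by norm_num)
  have hpt : ∀ a, p a * (Real.logb 2 (GU (t (f a), u a)) + Real.logb 2 (F (f a))
      - Real.logb 2 (FU (f a, u a)) - Real.logb 2 (G (t (f a)))) * Real.log 2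
      ≤ p a * (GU (t (f a), u a) * F (f a) / (FU (f a, u a) * G (t (f a)))) - p a := by
    intro a
    rcases (hp.1 a).eq_or_lt with h | h
    · simp [← h]
    · have pF : 0 < F (f a) := h.trans_le (aux_le_push hp.1 f a)
      have pG : 0 < G (t (f a)) := h.trans_le (aux_le_push hp.1 (fun a => t (f a)) a)
      have pFU : 0 < FU (f a, u a) := h.trans_le (aux_le_push hp.1 (fun a => (f a, u a)) a)
      have pGU : 0 < GU (t (f a), u a) :=
        h.trans_le (aux_le_push hp.1 (fun a => (t (f a), u a)) a)
      have h3 := Real.log_le_sub_one_of_pos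
        (div_pos (mul_pos pGU pF) (mul_pos pFU pG))
      rw [Real.log_div (by positivity) (by positivity), Real.log_mul pGU.ne' pF.ne',
        Real.log_mul pFU.ne' pG.ne'] at h3
      have h4 := mul_le_mul_of_nonneg_left h3 h.le
      refine le_trans (le_of_eq ?_) (h4.trans (le_of_eq (by ring)))
      unfold Real.logb
      field_simp
      ring
  have hs := Finset.sum_le_sum fun a (_ : a ∈ Finset.univ) => hpt a
  rw [Finset.sum_sub_distrib, hp.2, ← Finset.sum_mul] at hs
  have h5 : (∑ a, p a * (Real.logb 2 (GU (t (f a), u a)) + Real.logb 2 (F (f a))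
      - Real.logb 2 (FU (f a, u a)) - Real.logb 2 (G (t (f a))))) ≤ 0 := by
    by_contra hc
    push Not at hc
    have := mul_pos hc hl2
    linarith
  simp only [mul_sub, mul_add, Finset.sum_sub_distrib, Finset.sum_add_distrib] at h5
  rw [e1, e2, e3, e4]
  linarith

theorem aux_iid_pmf {α : Type*} [Fintype α] {p : α → ℝ} (hp : IsPMF p) (n : ℕ) :
    IsPMF (iid p n) := by
  refine ⟨fun x => Finset.prod_nonneg fun i _ => hp.1 _, ?_⟩
  unfold iid
  have := (Finset.prod_univ_sum (fun _ : Fin n => (Finset.univ : Finset α))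
    (fun _ a => p a)).symm
  rw [Fintype.piFinset_univ] at this
  rw [this, hp.2]
  simp

/-- restriction to `V ∩ [0,k)`, padded by zeros -/
def auxR {N : ℕ} (V : Finset (Fin N)) (k : ℕ) (a : Fin N → ZMod 2) : Fin N → ZMod 2 :=
  fun i => if i ∈ V ∧ (i : ℕ) < k then a i else 0

theorem auxR_eq {N : ℕ} (V : Finset (Fin N)) (k : ℕ) (a b : Fin N → ZMod 2) :
    auxR V k a = auxR V k b ↔ ∀ i, i ∈ V → (i : ℕ) < k → a i = b i := by
  unfold auxR
  constructor
  · intro h i hi hk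
    have := congrFun h i
    simpa [hi, hk] using this
  · intro h
    funext i
    by_cases hc : i ∈ V ∧ (i : ℕ) < k
    · simp only [if_pos hc]; exact h i hc.1 hc.2
    · simp only [if_neg hc]

theorem auxR_succ {N : ℕ} (p : (Fin N → ZMod 2) → ℝ) (V : Finset (Fin N)) (k : ℕ) (hk : k < N)
    (hV : (⟨k, hk⟩ : Fin N) ∈ V) :
    Hsh (push p (auxR V (k + 1))) = Hsh (push p (fun a => (auxR V k a, a ⟨k, hk⟩))) := by
  apply aux_Hsh_congr
  intro a b
  rw [Prod.mk.injEq, auxR_eq, auxR_eq]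
  constructor
  · intro h
    exact ⟨fun i hi hk' => h i hi (by omega), h _ hV (by simp)⟩
  · rintro ⟨h1, h2⟩ i hi hi'
    rcases Nat.lt_succ_iff_lt_or_eq.1 hi' with h | h
    · exact h1 i hi h
    · have : i = ⟨k, hk⟩ := Fin.ext h
      rw [this]; exact h2

theorem auxR_prefix {N : ℕ} (p : (Fin N → ZMod 2) → ℝ) (k : ℕ) (hk : k ≤ N) :
    Hsh (push p (fun a => fun j : Fin k => a (Fin.castLE hk j)))
      = Hsh (push p (auxR Finset.univ k)) := by
  apply aux_Hsh_congr
  intro a b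
  rw [auxR_eq]
  constructor
  · intro h i _ hi
    exact congrFun h ⟨i, hi⟩
  · intro h
    funext j
    exact h _ (Finset.mem_univ _) j.isLt

theorem aux_main {N : ℕ} {p : (Fin N → ZMod 2) → ℝ} (hp : IsPMF p) (V : Finset (Fin N))
    (c : ℝ)
    (hV : ∀ i : Fin N, i ∈ V → c ≤ Hsh (push p (auxR Finset.univ ((i : ℕ) + 1)))
      - Hsh (push p (auxR Finset.univ (i : ℕ)))) (k : ℕ) (hk : k ≤ N) :
    ((V.filter (fun i : Fin N => (i : ℕ) < k)).card : ℝ) * c ≤ Hsh (push p (auxR V k)) := by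
  induction k with
  | zero =>
    simp only [Nat.not_lt_zero, Finset.filter_false, Finset.card_empty, Nat.cast_zero, zero_mul]
    rw [aux_Hsh]
    have : ∀ a, push p (auxR V 0) (auxR V 0 a) = 1 := by
      intro a
      unfold push
      rw [← hp.2]
      refine Finset.sum_congr rfl fun x _ => if_pos ?_
      rw [auxR_eq]; intro i _ h; omega
    simp [this]
  | succ k ih =>
    have ih := ih (by omega)
    have hk' : k < N := hk
    by_cases h : (⟨k, hk'⟩ : Fin N) ∈ V
    · have hc : V.filter (fun i : Fin N => (i : ℕ) < k + 1)
          = insert ⟨k, hk'⟩ (V.filter (fun i : Fin N => (i : ℕ) < k)) := by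
        ext i
        simp only [Finset.mem_filter, Finset.mem_insert, Fin.ext_iff]
        constructor
        · rintro ⟨h1, h2⟩
          by_cases h3 : (i : ℕ) = k
          · exact Or.inl h3
          · exact Or.inr ⟨h1, by omega⟩
        · rintro (h1 | ⟨h1, h2⟩)
          · have : i = ⟨k, hk'⟩ := Fin.ext h1
            exact ⟨this ▸ h, by omega⟩
          · exact ⟨h1, by omega⟩
      rw [hc, Finset.card_insert_of_notMem (by simp), auxR_succ p V k hk' h]
      have h1 := hV _ h
      dsimp only at h1
      rw [auxR_succ p _ k hk' (Finset.mem_univ _)] at h1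
      have h2 := aux_submod hp (auxR Finset.univ k)
        (fun x i => if i ∈ V then x i else 0) (fun a => a ⟨k, hk'⟩)
      have h3 : ∀ a : Fin N → ZMod 2,
          (fun i => if i ∈ V then auxR Finset.univ k a i else 0) = auxR V k a := by
        intro a
        funext i
        by_cases h4 : i ∈ V <;> simp [auxR, h4]
      have h5 : (fun (a : Fin N → ZMod 2) (i : Fin N) =>
          if i ∈ V then auxR Finset.univ k a i else 0) = auxR V k := funext h3
      simp only [h3] at h2
      rw [h5] at h2
      push_cast
      linarith
    · have hc : V.filter (fun i : Fin N => (i : ℕ) < k + 1) = V.filter (fun i : Fin N => (i : ℕ) < k) := by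
        refine Finset.filter_congr fun i hi => ?_
        have : (i : ℕ) ≠ k := fun h' => h ((Fin.ext h' : i = ⟨k, hk'⟩) ▸ hi)
        omega
      rw [hc]
      refine ih.trans (le_of_eq ?_)
      apply aux_Hsh_congr
      intro a b
      rw [auxR_eq, auxR_eq]
      refine forall_congr' fun i => forall_congr' fun hi => ?_
      have : (i : ℕ) ≠ k := fun h' => h ((Fin.ext h' : i = ⟨k, hk'⟩) ▸ hi)
      have : (i : ℕ) < k ↔ (i : ℕ) < k + 1 := by omega
      rw [this]

theorem aux_KL {α : Type*} [Fintype α] {p : α → ℝ} (hp : IsPMF p) (m : ℕ) :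
    KL p (fun _ => 1 / (2 : ℝ) ^ m) = m - Hsh p := by
  unfold KL Hsh
  have : ∀ a, p a * Real.logb 2 (p a / (1 / (2 : ℝ) ^ m))
      = p a * m + p a * Real.logb 2 (p a) := by
    intro a
    rcases eq_or_ne (p a) 0 with h | h
    · simp [h]
    · rw [Real.logb_div h (by positivity), one_div, Real.logb_inv, Real.logb_pow,
        Real.logb_self_eq_one (by norm_num)]
      ring
  simp_rw [this]
  rw [Finset.sum_add_distrib, ← Finset.sum_mul, hp.2]
  ring

/-- Lemma 7: near-uniformity of the polarized bits `A^N[V_X]`. -/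
theorem statement11 (pX : ZMod 2 → ℝ) (hX : IsPMF pX)
    (β : ℝ) (hβ0 : 0 < β) (hβ : β < 1 / 2) (n : ℕ) :
    -- `log 2^{|V_X|} − H(A^N[V_X]) ≤ N δ_N`
    ((polarV pX β n).card : ℝ)
        - Hsh (push (polarA pX n)
            (fun a => fun i : (polarV pX β n) => a i.1))
      ≤ (2 ^ n : ℕ) * polarδ n β ∧
    -- equivalently, the KL divergence from the uniform distribution is at most `N δ_N`
    KL (push (polarA pX n) (fun a => fun i : (polarV pX β n) => a i.1))
       (fun _ => 1 / (2:ℝ) ^ (polarV pX β n).card)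
      ≤ (2 ^ n : ℕ) * polarδ n β := by
  have hA : IsPMF (polarA pX n) := aux_push_pmf (aux_iid_pmf hX _) _
  rw [aux_KL (aux_push_pmf hA _), and_self]
  have hδ : 0 ≤ polarδ n β := by unfold polarδ; positivity
  have h := aux_main hA (polarV pX β n) (1 - polarδ n β) (by
    intro i hi
    have h1 := (Finset.mem_filter.1 hi).2
    unfold polarCondH at h1
    rw [auxR_prefix _ _ i.isLt, auxR_prefix _ _ i.isLt.le] at h1
    exact h1.le) (2 ^ n) le_rfl
  rw [Finset.filter_true_of_mem (fun i _ => i.isLt)] at h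
  have he : Hsh (push (polarA pX n) (auxR (polarV pX β n) (2 ^ n)))
      = Hsh (push (polarA pX n) (fun a => fun i : (polarV pX β n) => a i.1)) := by
    apply aux_Hsh_congr
    intro a b
    rw [auxR_eq]
    constructor
    · intro h
      funext i
      exact h i.1 i.2 i.1.isLt
    · intro h i hi _
      exact congrFun h ⟨i, hi⟩
  rw [he] at h
  have hc : ((polarV pX β n).card : ℝ) ≤ (2 ^ n : ℕ) := by
    have := Finset.card_le_univ (polarV pX β n)
    rw [Fintype.card_fin] at this
    exact_mod_cast this
  have := mul_le_mul_of_nonneg_right hc hδ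
  linarith
end
end
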